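/- arXiv:2006.06107 — 2 statements merged into one kernel-verified Lean document; each statement's English description precedes it below -/
import Mathlib

section
/- Let k ≥ 3 be an integer. There exists n₀ such that for all n > n₀, the Turán number of the odd wheel W_{2k+1} satisfies ex(n, W_{2k+1}) = max{ n₀'·n₁ + ⌊(k−1)·n₀'/2⌋ : n₀' + n₁ = n, n₀', n₁ ≥ 0 } + 1. -/
/-!
Extremal graphs are complete bipartite graphs with a nearly `(k - 1)`-regular graph added inside one
part and a single edge inside the other.

**Lower bound.** Take parts of sizes `p` and `q = n - p`, with `p` optimal, join them completely,
put a graph `D` on the first part and a single edge on the second. If `D` has maximum degree at most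
`k - 1` and components of at most `2 * k - 2` vertices, the join has no `W_{2k+1}`: a hub in `D`
forces two rim edges in the second part, and a hub in the second part forces a path on `2 * k - 1`
vertices inside `D` (`not_contains_graphJoin`). Such a `D` with `⌊(k - 1) p / 2⌋` edges is a disjoint
union of copies of `K_k` and `K_{k-1,k-1}`, together with, when `(k - 1) * p` is odd, one graph on
`k + 1` vertices with a single vertex of degree `k - 2` (`nice_mod_two`).

**Upper bound.** Deleting vertices of small degree gains against the extremal function
(`card_edges_le_add`), so the minimum degree may be assumed to be almost `n / 2`. Neighbourhoods
contain no cycle of length `2 * k`, hence span `o(n²)` edges (`exists_isEvenCycle_of_dense`), so that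
the neighbourhood of any vertex and its complement are an almost complete, almost balanced
bipartition, which is then cleaned up to parts `A`, `B` with small inner degrees
(`exists_partition`).

For such a partition (`Cfg`) the lemma `Cfg.no_segments` is decisive: a star in `A` and disjoint path
segments in `B` completely joined to it interleave to a wheel whose hub is the centre of the star.
It gives inner degrees at most `k - 1`, and shows that vertices of large inner degree on one side
force almost all inner degrees on the other side to be small. Let `a` and `b` be the maximum inner
degrees of `A` and `B`, with `b ≤ a`. If `a = k - 1` is attained often, `B` spans at most one edge beyond
those paid for by missing cross pairs (`Cfg.sum_degIn_le_of_many`), which is the extremal value.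
If `a + b ≤ k - 1`, optimizing `|A| |B| + (a |A| + b |B|) / 2` gives at most the extremal value. In
every other case the average inner degree is at most `(k - 2) / 2`, up to `O(1)` inner edges, which
loses a linear number of edges (`Cfg.edge_bound_aux`).
-/

open SimpleGraph

/-- `G` contains `H` as a (not necessarily induced) subgraph. -/
def Contains {α β : Type*} (G : SimpleGraph α) (H : SimpleGraph β) : Prop :=
  ∃ f : H →g G, Function.Injective f

/-- The join `G₁ ⊗ G₂` of two graphs: disjoint union plus all cross edges. -/
def graphJoin {α β : Type*} (G : SimpleGraph α) (H : SimpleGraph β) :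
    SimpleGraph (α ⊕ β) :=
  SimpleGraph.fromRel (fun u v =>
    match u, v with
    | Sum.inl a, Sum.inl b => G.Adj a b
    | Sum.inr a, Sum.inr b => H.Adj a b
    | Sum.inl _, Sum.inr _ => True
    | Sum.inr _, Sum.inl _ => True)

/-- The wheel `W_q` on `q` vertices: a hub joined to all vertices of a cycle `C_{q-1}`. -/
def wheelGraph (q : ℕ) : SimpleGraph (Unit ⊕ Fin (q - 1)) :=
  graphJoin (⊥ : SimpleGraph Unit) (cycleGraph (q - 1))

/-- The star `S_{k+1}` with `k` leaves: a hub joined to `k` independent vertices. -/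
def starGraph (k : ℕ) : SimpleGraph (Unit ⊕ Fin k) :=
  graphJoin (⊥ : SimpleGraph Unit) (⊥ : SimpleGraph (Fin k))

/-- `m` pairwise vertex-disjoint copies of `H`. -/
def disjointCopies (m : ℕ) {V : Type*} (H : SimpleGraph V) : SimpleGraph (Fin m × V) :=
  SimpleGraph.fromRel (fun u v => u.1 = v.1 ∧ H.Adj u.2 v.2)

/-- The disjoint union of the family of graphs `G i`. -/
def disjointSigma {ι : Type*} {V : ι → Type*} (G : ∀ i, SimpleGraph (V i)) :
    SimpleGraph (Σ i, V i) :=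
  SimpleGraph.fromRel (fun u v => ∃ h : u.1 = v.1, (G v.1).Adj (h ▸ u.2) v.2)

/-- The Turán number `ex(n, H)`: the maximum number of edges of an `H`-free graph
on `n` vertices. -/
noncomputable def exNum {β : Type*} (n : ℕ) (H : SimpleGraph β) : ℕ :=
  sSup {e | ∃ G : SimpleGraph (Fin n), ¬ Contains G H ∧ Nat.card G.edgeSet = e}

open Finset in
/-- The number of neighbours of `v` inside the vertex set `X`. -/
def degIn {V : Type*} (G : SimpleGraph V) [DecidableRel G.Adj] (X : Finset V) (v : V) : ℕ :=
  #{u ∈ X | G.Adj v u}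

/-- The list `c` runs once around a cycle of length `2 * k` in `G`. -/
def IsEvenCycle {V : Type*} (G : SimpleGraph V) (k : ℕ) (c : List V) : Prop :=
  c.length = 2 * k ∧ c.Nodup ∧ c.IsChain G.Adj ∧
    ∀ x ∈ c.getLast?, ∀ y ∈ c.head?, G.Adj x y

/-- `G` has no wheel with a rim of length `2 * k`: no neighbourhood contains a cycle of
that length. -/
def WheelFree {V : Type*} (G : SimpleGraph V) (k : ℕ) : Prop :=
  ∀ (v : V) (c : List V), IsEvenCycle G k c → ¬ ∀ x ∈ c, G.Adj v x

/-! ### Building even cycles from vertices and path segments -/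

section Blocks

variable {V : Type*} {G : SimpleGraph V}

lemma perm_zipWith_cons_flatten : ∀ (as : List V) (Ss : List (List V)),
    as.length = Ss.length → ((List.zipWith List.cons as Ss).flatten).Perm (as ++ Ss.flatten)
  | [], [], _ => by simp
  | [], _ :: _, h => by simp at h
  | _ :: _, [], h => by simp at h
  | a :: as, S :: Ss, h => by
    have ih := perm_zipWith_cons_flatten as Ss (by simpa using h)
    simp only [List.zipWith_cons_cons, List.flatten_cons, List.cons_append]
    refine List.Perm.cons a ?_
    refine (List.Perm.append_left S ih).trans ?_
    rw [← List.append_assoc, ← List.append_assoc]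
    exact List.Perm.append_right _ List.perm_append_comm

lemma mem_zipWith_cons : ∀ (as : List V) (Ss : List (List V)) (l : List V),
    l ∈ List.zipWith List.cons as Ss → ∃ a ∈ as, ∃ S ∈ Ss, l = a :: S
  | [], _, l, h => by simp at h
  | _ :: _, [], l, h => by simp at h
  | a :: as, S :: Ss, l, h => by
    simp only [List.zipWith_cons_cons, List.mem_cons] at h
    rcases h with h | h
    · exact ⟨a, by simp, S, by simp, h⟩
    · obtain ⟨a', ha', S', hS', e⟩ := mem_zipWith_cons as Ss l h
      exact ⟨a', by simp [ha'], S', by simp [hS'], e⟩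

lemma isChain_flatten_blocks (as : List V) (Ss Z : List (List V))
    (hne : ∀ S ∈ Ss, S ≠ []) (hch : ∀ S ∈ Ss, S.IsChain G.Adj)
    (hadj : ∀ a ∈ as, ∀ S ∈ Ss, ∀ x ∈ S, G.Adj a x)
    (hZ : ∀ l ∈ Z, ∃ a ∈ as, ∃ S ∈ Ss, l = a :: S) : Z.flatten.IsChain G.Adj := by
  rw [List.isChain_flatten]
  · constructor
    · intro l hl
      obtain ⟨a, ha, S, hS, rfl⟩ := hZ l hl
      rw [List.isChain_cons]
      exact ⟨fun y hy => hadj a ha S hS y (List.mem_of_mem_head? hy), hch S hS⟩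
    · refine List.Pairwise.isChain (List.pairwise_of_forall_mem_list ?_)
      intro l hl l' hl' x hx y hy
      obtain ⟨a, ha, S, hS, rfl⟩ := hZ l hl
      obtain ⟨a', ha', S', hS', rfl⟩ := hZ l' hl'
      obtain ⟨b, T, rfl⟩ := List.exists_cons_of_ne_nil (hne S hS)
      have hy' : a' = y := by simpa using hy
      subst hy'
      rw [List.getLast?_cons_cons] at hx
      exact (hadj a' ha' _ hS x (List.mem_of_mem_getLast? hx)).symm
  · intro h
    obtain ⟨a, -, S, -, e⟩ := hZ _ h
    simp at e

/-- Interleaving vertices `a₁, …, a_d` with path segments `S₁, …, S_d` closes up to the cycle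
`a₁ S₁ a₂ S₂ … a_d S_d`, provided that every `a_i` is adjacent to every segment vertex. -/
lemma isEvenCycle_interleave {k : ℕ} (as : List V) (Ss : List (List V))
    (hlen : as.length = Ss.length)
    (hne : ∀ S ∈ Ss, S ≠ []) (hch : ∀ S ∈ Ss, S.IsChain G.Adj)
    (hadj : ∀ a ∈ as, ∀ S ∈ Ss, ∀ x ∈ S, G.Adj a x)
    (hnd : (as ++ Ss.flatten).Nodup) (hk : as.length + Ss.flatten.length = 2 * k) :
    IsEvenCycle G k (List.zipWith List.cons as Ss).flatten := by
  have hp := perm_zipWith_cons_flatten as Ss hlen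
  refine ⟨by rw [hp.length_eq, List.length_append, hk], hp.nodup_iff.2 hnd, ?_⟩
  -- Running twice around the list gives a chain, which also yields the closing edge.
  have h2 := isChain_flatten_blocks (G := G) as Ss
    (List.zipWith List.cons as Ss ++ List.zipWith List.cons as Ss) hne hch hadj (by
      intro l hl
      rw [List.mem_append, or_self] at hl
      exact mem_zipWith_cons as Ss l hl)
  rw [List.flatten_append, List.isChain_append] at h2
  exact ⟨h2.1, h2.2.2⟩

/-- Segments in the common neighbourhood `W` of `v` and of the neighbours `S` of `v` give a
wheel with hub `v`, as soon as the lengths add up; the remaining gaps between vertices of `S`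
are filled by single vertices of `W`. -/
lemma WheelFree.no_segments [DecidableEq V] {k : ℕ} (hG : WheelFree G k) (v : V) (S W : Finset V)
    (hS : ∀ a ∈ S, G.Adj v a) (hWv : ∀ x ∈ W, G.Adj v x) (hW : ∀ a ∈ S, ∀ x ∈ W, G.Adj a x)
    (hcard : 2 * k ≤ W.card) (Ts : List (List V))
    (hne : ∀ T ∈ Ts, T ≠ []) (hch : ∀ T ∈ Ts, T.IsChain G.Adj)
    (hnd : Ts.flatten.Nodup) (hTW : ∀ x ∈ Ts.flatten, x ∈ W) (hlen : Ts.length ≤ S.card)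
    (hk : Ts.flatten.length + (S.card - Ts.length) + S.card = 2 * k) : False := by
  have h1 : S.card - Ts.length ≤ (W \ Ts.flatten.toFinset).card := by
    have := Finset.le_card_sdiff Ts.flatten.toFinset W
    have h2 := List.toFinset_card_le Ts.flatten
    omega
  obtain ⟨R, hRsub, hRcard⟩ := Finset.exists_subset_card_eq h1
  set Ss := Ts ++ R.toList.map (fun x => [x]) with hSs
  have hflat : Ss.flatten = Ts.flatten ++ R.toList := by
    rw [hSs, List.flatten_append, ← List.flatMap_def, List.flatMap_singleton']
  have hmem : ∀ x ∈ Ss.flatten, x ∈ W := by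
    intro x hx
    rw [hflat, List.mem_append] at hx
    rcases hx with hx | hx
    · exact hTW x hx
    · exact (Finset.mem_sdiff.1 (hRsub (Finset.mem_toList.1 hx))).1
  have hcyc := isEvenCycle_interleave (G := G) (k := k) S.toList Ss (by simp [hSs]; omega)
    (by
      intro T hT
      rw [hSs, List.mem_append] at hT
      rcases hT with hT | hT
      · exact hne T hT
      · obtain ⟨x, -, rfl⟩ := List.mem_map.1 hT
        simp)
    (by
      intro T hT
      rw [hSs, List.mem_append] at hT
      rcases hT with hT | hT
      · exact hch T hT
      · obtain ⟨x, -, rfl⟩ := List.mem_map.1 hT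
        simp)
    (by
      intro a ha T hT x hx
      exact hW a (Finset.mem_toList.1 ha) x (hmem x (List.mem_flatten_of_mem hT hx)))
    (by
      rw [hflat, List.nodup_append, List.nodup_append]
      refine ⟨S.nodup_toList, ⟨hnd, R.nodup_toList, ?_⟩, ?_⟩
      · rintro x hx y hy rfl
        have := (Finset.mem_sdiff.1 (hRsub (Finset.mem_toList.1 hy))).2
        exact this (List.mem_toFinset.2 hx)
      · rintro x hx y hy rfl
        rw [← hflat] at hy
        exact (hW x (Finset.mem_toList.1 hx) x (hmem x hy)).ne rfl)
    (by rw [hflat, List.length_append, Finset.length_toList, Finset.length_toList]; omega)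
  refine hG v _ hcyc ?_
  intro x hx
  have hx' := (perm_zipWith_cons_flatten S.toList Ss (by simp [hSs]; omega)).mem_iff.1 hx
  rw [List.mem_append] at hx'
  rcases hx' with hx' | hx'
  · exact hS x (Finset.mem_toList.1 hx')
  · exact hWv x (hmem x hx')

end Blocks

/-! ### Wheels as a hub together with a cycle -/

lemma wheelGraph_adj_inl_inr (q : ℕ) (u : Unit) (i : Fin (q - 1)) :
    (wheelGraph q).Adj (Sum.inl u) (Sum.inr i) := by
  simp [wheelGraph, graphJoin]

lemma wheelGraph_adj_inr_inr (q : ℕ) (i j : Fin (q - 1)) :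
    (wheelGraph q).Adj (Sum.inr i) (Sum.inr j) ↔ (cycleGraph (q - 1)).Adj i j := by
  simp only [wheelGraph, graphJoin, SimpleGraph.fromRel_adj, ne_eq, Sum.inr.injEq]
  constructor
  · rintro ⟨-, h | h⟩
    · exact h
    · exact h.symm
  · exact fun h => ⟨h.ne, Or.inl h⟩

lemma cycleGraph_adj_val {n : ℕ} {u v : Fin n} (h : (u - v).val = 1) :
    u.val = v.val + 1 ∨ (v.val + 1 = n ∧ u.val = 0) := by
  rw [Fin.sub_def] at h
  have hu := u.isLt
  have hv := v.isLt
  simp only at h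
  by_cases h1 : n - v.val + u.val < n
  · rw [Nat.mod_eq_of_lt h1] at h
    omega
  · rw [Nat.mod_eq_sub_mod (by omega), Nat.mod_eq_of_lt (by omega)] at h
    omega

lemma wheelFree_of_not_contains {V : Type*} {G : SimpleGraph V} {k : ℕ}
    (h : ¬ Contains G (wheelGraph (2 * k + 1))) : WheelFree G k := by
  rintro v c ⟨hlen, hnd, hch, hclose⟩ hv
  apply h
  have hl : ∀ i : Fin (2 * k + 1 - 1), i.val < c.length := fun i => by
    have := i.isLt
    omega
  have key : ∀ i j : Fin (2 * k + 1 - 1), (i - j).val = 1 →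
      G.Adj (c.get ⟨i.val, hl i⟩) (c.get ⟨j.val, hl j⟩) := by
    intro i j hij
    have hi := hl i
    have hj := hl j
    rcases cycleGraph_adj_val hij with e | ⟨e1, e2⟩
    · have := List.isChain_iff_getElem.1 hch j.val (by omega)
      simp only [e]
      exact this.symm
    · refine (hclose _ ?_ _ ?_).symm
      · rw [List.getLast?_eq_getElem?, List.getElem?_eq_getElem (by omega)]
        have : c.length - 1 = j.val := by omega
        simp [this]
      · rw [List.head?_eq_getElem?, List.getElem?_eq_getElem (by omega)]
        simp [e2]
  refine ⟨⟨fun x => match x with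
    | Sum.inl _ => v
    | Sum.inr i => c.get ⟨i.val, hl i⟩, ?_⟩, ?_⟩
  · rintro (a | i) (b | j) hab
    · exact absurd rfl hab.ne
    · exact hv _ (List.getElem_mem _)
    · exact (hv _ (List.getElem_mem _)).symm
    · rw [wheelGraph_adj_inr_inr, cycleGraph_adj'] at hab
      rcases hab with hab | hab
      · exact key i j hab
      · exact (key j i hab).symm
  · rintro (a | i) (b | j) hab
    · rfl
    · exact absurd hab (hv _ (List.getElem_mem _)).ne
    · exact absurd hab (hv _ (List.getElem_mem _)).ne'
    · have := (hnd.getElem_inj_iff).1 hab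
      rw [Fin.ext this]

/-! ### Even cycles in dense graphs -/

section Dense

open Finset

variable {V : Type*} [DecidableEq V]

lemma isEvenCycle_of_bipartite {G : SimpleGraph V} {k : ℕ} (S W : Finset V)
    (hS : #S = k) (hW : #W = k) (h : ∀ a ∈ S, ∀ x ∈ W, G.Adj a x) :
    ∃ c, IsEvenCycle G k c ∧ ∀ x ∈ c, x ∈ S ∪ W := by
  have hfl : (W.toList.map (fun x => [x])).flatten = W.toList := by
    rw [← List.flatMap_def, List.flatMap_singleton']
  have hlen : S.toList.length = (W.toList.map (fun x => [x])).length := by simp [hS, hW]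
  refine ⟨_, isEvenCycle_interleave (G := G) (k := k) S.toList (W.toList.map (fun x => [x]))
    hlen ?_ ?_ ?_ ?_ ?_, ?_⟩
  · intro T hT
    obtain ⟨x, -, rfl⟩ := List.mem_map.1 hT
    simp
  · intro T hT
    obtain ⟨x, -, rfl⟩ := List.mem_map.1 hT
    simp
  · intro a ha T hT x hx
    have : x ∈ (W.toList.map (fun x => [x])).flatten := List.mem_flatten_of_mem hT hx
    rw [hfl] at this
    exact h a (mem_toList.1 ha) x (mem_toList.1 this)
  · rw [hfl, List.nodup_append]
    refine ⟨S.nodup_toList, W.nodup_toList, ?_⟩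
    rintro x hx y hy rfl
    exact (h x (mem_toList.1 hx) x (mem_toList.1 hy)).ne rfl
  · rw [hfl, length_toList, length_toList]
    omega
  · intro x hx
    have := (perm_zipWith_cons_flatten _ _ hlen).mem_iff.1 hx
    rw [hfl, List.mem_append, mem_toList, mem_toList] at this
    exact mem_union.2 this

/-- The Kővári–Sós–Turán argument: if more than `(k - 1) * C(n, k)` pairs `(v, S)` with `S` a
`k`-set of neighbours of `v` in `N` exist, then a `K_{k,k}` does. -/
lemma exists_isEvenCycle_of_choose [Fintype V] {G : SimpleGraph V} [DecidableRel G.Adj] {k : ℕ}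
    (N X : Finset V) (hX : X ⊆ N) (D : ℕ) (hD : ∀ v ∈ X, D ≤ degIn G N v)
    (hcount : (Fintype.card V).choose k * k < #X * D.choose k) :
    ∃ c, IsEvenCycle G k c ∧ ∀ x ∈ c, x ∈ N := by
  set P := (univ : Finset V).powersetCard k with hP
  have hsum : ∑ v ∈ X, #{S ∈ P | S ⊆ N.filter (G.Adj v)} =
      ∑ S ∈ P, #{v ∈ X | S ⊆ N.filter (G.Adj v)} :=
    sum_card_bipartiteAbove_eq_sum_card_bipartiteBelow
      (fun v S => S ⊆ N.filter (G.Adj v))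
  have hlow : #X * D.choose k ≤ ∑ v ∈ X, #{S ∈ P | S ⊆ N.filter (G.Adj v)} := by
    rw [← smul_eq_mul]
    refine card_nsmul_le_sum _ _ _ ?_
    intro v hv
    have e : {S ∈ P | S ⊆ N.filter (G.Adj v)} = (N.filter (G.Adj v)).powersetCard k := by
      ext S
      simp [hP, mem_powersetCard, and_comm]
    rw [e, card_powersetCard]
    exact Nat.choose_le_choose k (hD v hv)
  have hex : ∃ S ∈ P, k < #{v ∈ X | S ⊆ N.filter (G.Adj v)} := by
    by_contra! hcon
    have := sum_le_card_nsmul P _ k hcon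
    have hPc : #P = (Fintype.card V).choose k := by rw [hP, card_powersetCard, card_univ]
    rw [smul_eq_mul, hPc] at this
    omega
  obtain ⟨S, hSP, hS⟩ := hex
  obtain ⟨W, hWsub, hWcard⟩ := exists_subset_card_eq hS.le
  have hne : W.Nonempty ∨ k = 0 := by
    rcases Nat.eq_zero_or_pos k with h | h
    · exact Or.inr h
    · exact Or.inl (card_pos.1 (by omega))
  have hSk : #S = k := (mem_powersetCard.1 hSP).2
  obtain ⟨c, hc, hcm⟩ := isEvenCycle_of_bipartite (G := G) (k := k) S W hSk hWcard (by
    intro a ha x hx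
    have := (mem_filter.1 (hWsub hx)).2 ha
    exact (mem_filter.1 this).2.symm)
  refine ⟨c, hc, fun x hx => ?_⟩
  rcases mem_union.1 (hcm x hx) with hx | hx
  · rcases hne with ⟨w, hw⟩ | h0
    · exact (mem_filter.1 ((mem_filter.1 (hWsub hw)).2 hx)).1
    · rw [h0, card_eq_zero] at hSk
      simp [hSk] at hx
  · exact hX (mem_filter.1 (hWsub hx)).1

/-- A vertex set spanning at least `γ * n ^ 2` ordered adjacent pairs contains an even cycle of
any prescribed length, for large `n`. -/
lemma exists_isEvenCycle_of_dense (k : ℕ) {γ : ℝ} (hγ : 0 < γ) :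
    ∃ n₀ : ℕ, ∀ (V : Type) [Fintype V] [DecidableEq V] (G : SimpleGraph V) [DecidableRel G.Adj],
      n₀ ≤ Fintype.card V → ∀ N : Finset V,
      γ * (Fintype.card V : ℝ) ^ 2 ≤ ∑ v ∈ N, (degIn G N v : ℝ) →
      ∃ c, IsEvenCycle G k c ∧ ∀ x ∈ c, x ∈ N := by
  obtain ⟨n₁, hn₁⟩ := exists_nat_gt (4 * k / γ)
  obtain ⟨n₂, hn₂⟩ := exists_nat_gt (k / (γ / 2 * (γ / 4) ^ k))
  refine ⟨n₁ + n₂ + 1, ?_⟩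
  intro V _ _ G _ hn N hN
  set n := Fintype.card V with hndef
  have hn1 : (n₁ : ℝ) ≤ n := by exact_mod_cast (by omega : n₁ ≤ n)
  have hn2 : (n₂ : ℝ) ≤ n := by exact_mod_cast (by omega : n₂ ≤ n)
  have hnpos : (0 : ℝ) < n := by exact_mod_cast (by omega : 0 < n)
  -- vertices of degree at least half the average
  set X := N.filter (fun v => γ / 2 * n ≤ (degIn G N v : ℝ)) with hX
  have hNn : (#N : ℝ) ≤ n := by exact_mod_cast card_le_univ N
  have hdeg : ∀ v, (degIn G N v : ℝ) ≤ n := fun v => by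
    exact_mod_cast (card_le_univ _)
  have hXbig : γ / 2 * n ≤ #X := by
    have hsplit := sum_filter_add_sum_filter_not N (fun v => γ / 2 * n ≤ (degIn G N v : ℝ))
      (fun v => (degIn G N v : ℝ))
    have h1 : ∑ v ∈ X, (degIn G N v : ℝ) ≤ #X * n := by
      rw [← nsmul_eq_mul]
      exact sum_le_card_nsmul _ _ _ fun v _ => hdeg v
    have h2 : ∑ v ∈ N.filter (fun v => ¬ γ / 2 * n ≤ (degIn G N v : ℝ)), (degIn G N v : ℝ) ≤
        n * (γ / 2 * n) := by
      refine (sum_le_card_nsmul _ _ (γ / 2 * n) fun v hv => ?_).trans ?_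
      · exact (not_le.1 (mem_filter.1 hv).2).le
      · rw [nsmul_eq_mul]
        have : (#(N.filter (fun v => ¬ γ / 2 * n ≤ (degIn G N v : ℝ))) : ℝ) ≤ n := by
          exact_mod_cast card_le_univ _
        gcongr
    have h3 : γ / 2 * n * n ≤ #X * n := by nlinarith
    exact le_of_mul_le_mul_right h3 hnpos
  set D := ⌈γ / 2 * n⌉₊ with hDdef
  have hDge : γ / 2 * n ≤ D := Nat.le_ceil _
  refine exists_isEvenCycle_of_choose N X (filter_subset _ _) D ?_ ?_
  · intro v hv
    exact Nat.ceil_le.2 (mem_filter.1 hv).2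
  have hkD : (k : ℝ) ≤ γ / 4 * n := by
    have : 4 * k / γ < n := lt_of_lt_of_le hn₁ hn1
    rw [div_lt_iff₀ hγ] at this
    linarith
  have hkD' : k ≤ D := by
    have : (k : ℝ) ≤ D := by nlinarith
    exact_mod_cast this
  have hc1 : n.choose k * k.factorial ≤ n ^ k := by
    rw [mul_comm, ← Nat.descFactorial_eq_factorial_mul_choose]
    exact Nat.descFactorial_le_pow n k
  have hc2 : (D + 1 - k) ^ k ≤ D.choose k * k.factorial := by
    rw [mul_comm, ← Nat.descFactorial_eq_factorial_mul_choose]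
    exact Nat.pow_sub_le_descFactorial D k
  have hc3 : (γ / 4 * n) ^ k ≤ (D.choose k * k.factorial : ℝ) := by
    have : ((D + 1 - k : ℕ) : ℝ) ^ k ≤ (D.choose k * k.factorial : ℝ) := by exact_mod_cast hc2
    refine le_trans ?_ this
    gcongr
    rw [Nat.cast_sub (by omega)]
    push_cast
    linarith
  have hc1' : (n.choose k * k.factorial : ℝ) ≤ (n : ℝ) ^ k := by exact_mod_cast hc1
  have hfac : (0 : ℝ) < k.factorial := by exact_mod_cast k.factorial_pos
  have hkey : (k : ℝ) < γ / 2 * n * (γ / 4) ^ k := by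
    have : k / (γ / 2 * (γ / 4) ^ k) < n := lt_of_lt_of_le hn₂ hn2
    rw [div_lt_iff₀ (by positivity)] at this
    linarith
  have hfin : (n.choose k * k : ℝ) * k.factorial < (#X * D.choose k : ℝ) * k.factorial := by
    calc (n.choose k * k : ℝ) * k.factorial = (n.choose k * k.factorial) * k := by ring
      _ ≤ (n : ℝ) ^ k * k := by gcongr
      _ < (n : ℝ) ^ k * (γ / 2 * n * (γ / 4) ^ k) := by gcongr
      _ = (γ / 2 * n) * (γ / 4 * n) ^ k := by rw [mul_pow]; ring
      _ ≤ #X * (D.choose k * k.factorial) := by gcongr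
      _ = _ := by ring
  have := lt_of_mul_lt_mul_right hfin hfac.le
  exact_mod_cast this

end Dense

/-! ### Stability: large minimum degree forces a near-bipartition -/

section Stability

open Finset

variable {V : Type*} [DecidableEq V] {G : SimpleGraph V} [DecidableRel G.Adj]

omit [DecidableEq V] in
lemma degIn_le_card (X : Finset V) (v : V) : degIn G X v ≤ #X := card_filter_le _ _

omit [DecidableEq V] in
lemma degIn_mono {X Y : Finset V} (h : X ⊆ Y) (v : V) : degIn G X v ≤ degIn G Y v :=
  card_le_card (filter_subset_filter _ h)

lemma degIn_le_add {X Y Z : Finset V} (h : X ⊆ Y ∪ Z) (v : V) :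
    degIn G X v ≤ degIn G Y v + degIn G Z v := by
  refine (degIn_mono h v).trans ?_
  unfold degIn
  rw [filter_union]
  exact card_union_le _ _

lemma degIn_union {X Y : Finset V} (h : Disjoint X Y) (v : V) :
    degIn G (X ∪ Y) v = degIn G X v + degIn G Y v := by
  unfold degIn
  rw [filter_union, card_union_of_disjoint (disjoint_filter_filter h)]

/-- The vertices outside two almost complete, almost independent halves `X`, `Y` attach to one
of them almost exclusively, and those leaning to `Y` span few edges. -/
lemma near_half [Fintype V] {γ δ η n : ℝ} (hn : n = Fintype.card V) (hn0 : 0 < n)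
    (hδ : 0 < δ) (hη : 0 < η) (hηδ : 4 * δ + 2 * γ < η ^ 2) (hsm : η + 3 * δ < 3 / 10)
    (hnb : ∀ v, ∑ u ∈ univ.filter (G.Adj v), (degIn G (univ.filter (G.Adj v)) u : ℝ) ≤ γ * n ^ 2)
    (hdeg : ∀ v, (1 / 2 - δ) * n ≤ degIn G univ v)
    (X Y : Finset V) (hXY : Disjoint X Y)
    (hX : (1 / 2 - δ) * n ≤ #X) (hY : (1 / 2 - δ) * n ≤ #Y)
    (hXs : ∑ x ∈ X, (degIn G X x : ℝ) ≤ γ * n ^ 2)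
    (hYs : ∑ x ∈ Y, (degIn G Y x : ℝ) ≤ γ * n ^ 2)
    (A : Finset V) (hA : ∀ v ∈ A, degIn G X v ≤ degIn G Y v) :
    (∀ v ∈ A, (degIn G A v : ℝ) ≤ (η + 2 * δ + 5 * γ) * n) ∧
      (#A : ℝ) ≤ (1 / 2 + 3 * δ + 5 * γ) * n := by
  set R := (X ∪ Y)ᶜ with hR
  have hcard : (#X : ℝ) + #Y + #R = n := by
    have := card_add_card_compl (X ∪ Y)
    rw [card_union_of_disjoint hXY] at this
    rw [hn, ← this, hR]
    push_cast
    ring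
  have hR0 : (0 : ℝ) ≤ #R := Nat.cast_nonneg _
  have hRn : (#R : ℝ) ≤ 2 * δ * n := by nlinarith
  have hXn : (#X : ℝ) ≤ (1 / 2 + δ) * n := by nlinarith
  have hYn : (#Y : ℝ) ≤ (1 / 2 + δ) * n := by nlinarith
  have hdecomp : ∀ v, (degIn G univ v : ℝ) ≤ degIn G X v + degIn G Y v + #R := by
    intro v
    have h1 : degIn G univ v ≤ degIn G (X ∪ Y) v + degIn G R v :=
      degIn_le_add (by rw [hR, union_compl]) v
    have h2 := degIn_le_add (G := G) (subset_refl (X ∪ Y)) v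
    have h3 := degIn_le_card (G := G) R v
    exact_mod_cast (by omega : degIn G univ v ≤ degIn G X v + degIn G Y v + #R)
  -- few pairs between `X` and `Y` are missing
  have hmiss : ∑ x ∈ X, ((#Y : ℝ) - degIn G Y x) ≤ (4 * δ + γ) * n ^ 2 := by
    have h1 : ∀ x ∈ X, ((#Y : ℝ) - degIn G Y x) ≤ 4 * δ * n + degIn G X x := by
      intro x _
      have := hdecomp x
      have := hdeg x
      linarith
    refine (sum_le_sum h1).trans ?_
    rw [sum_add_distrib, sum_const, nsmul_eq_mul]
    have : (#X : ℝ) ≤ n := by nlinarith [(Nat.cast_nonneg (#Y) : (0 : ℝ) ≤ #Y)]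
    have : (#X : ℝ) * (4 * δ * n) ≤ n * (4 * δ * n) := by gcongr
    nlinarith
  have hmin : ∀ v ∈ A, (degIn G X v : ℝ) ≤ η * n := by
    intro v hv
    by_contra! hcon
    have hcon2 : η * n < degIn G Y v :=
      lt_of_lt_of_le hcon (by exact_mod_cast hA v hv)
    set P := X.filter (G.Adj v) with hP
    set Q := Y.filter (G.Adj v) with hQ
    have hPc : (#P : ℝ) = degIn G X v := rfl
    have hQc : (#Q : ℝ) = degIn G Y v := rfl
    have hPN : P ⊆ univ.filter (G.Adj v) := filter_subset_filter _ (subset_univ _)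
    have hQN : Q ⊆ univ.filter (G.Adj v) := filter_subset_filter _ (subset_univ _)
    have h1 : ∑ x ∈ P, (degIn G Q x : ℝ) ≤ γ * n ^ 2 := by
      refine le_trans ?_ (hnb v)
      refine (sum_le_sum fun x _ => ?_).trans
        (sum_le_sum_of_subset_of_nonneg hPN fun _ _ _ => Nat.cast_nonneg _)
      exact_mod_cast degIn_mono hQN x
    have h2 : ∀ x ∈ P, (#Q : ℝ) - ((#Y : ℝ) - degIn G Y x) ≤ degIn G Q x := by
      intro x _
      have h3 : degIn G Y x ≤ degIn G Q x + degIn G (Y \ Q) x :=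
        degIn_le_add (by rw [union_sdiff_of_subset (filter_subset _ _)]) x
      have h4 := degIn_le_card (G := G) (Y \ Q) x
      have h5 : #(Y \ Q) + #Q = #Y := card_sdiff_add_card_eq_card (filter_subset _ _)
      have : degIn G Y x + #Q ≤ degIn G Q x + #Y := by omega
      have : (degIn G Y x + #Q : ℝ) ≤ degIn G Q x + #Y := by exact_mod_cast this
      linarith
    have h3 := sum_le_sum h2
    rw [sum_sub_distrib, sum_const, nsmul_eq_mul] at h3
    have h4 : ∑ x ∈ P, ((#Y : ℝ) - degIn G Y x) ≤ ∑ x ∈ X, ((#Y : ℝ) - degIn G Y x) := by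
      refine sum_le_sum_of_subset_of_nonneg (filter_subset _ _) fun x _ _ => ?_
      rw [sub_nonneg]
      exact_mod_cast degIn_le_card _ _
    have h5 : (η * n) * (η * n) ≤ #P * #Q := by
      rw [hPc, hQc]
      gcongr
    nlinarith [sq_nonneg n, pow_pos hn0 2]
  have hAY : (#(A ∩ Y) : ℝ) ≤ 5 * γ * n := by
    have h1 : ∀ v ∈ A ∩ Y, n / 5 ≤ (degIn G Y v : ℝ) := by
      intro v hv
      have := hmin v (mem_inter.1 hv).1
      have := hdecomp v
      have := hdeg v
      nlinarith
    have h2 := card_nsmul_le_sum _ _ _ h1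
    have h3 : ∑ v ∈ A ∩ Y, (degIn G Y v : ℝ) ≤ ∑ v ∈ Y, (degIn G Y v : ℝ) :=
      sum_le_sum_of_subset_of_nonneg inter_subset_right fun _ _ _ => Nat.cast_nonneg _
    rw [nsmul_eq_mul] at h2
    have h4 : (#(A ∩ Y) : ℝ) * n ≤ 5 * γ * n * n := by nlinarith
    exact le_of_mul_le_mul_right h4 hn0
  have hAsub : A ⊆ X ∪ (R ∪ (A ∩ Y)) := by
    intro v hv
    by_cases h1 : v ∈ X
    · simp [h1]
    · by_cases h2 : v ∈ Y
      · simp [h2, hv]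
      · simp [hR, h1, h2]
  constructor
  · intro v hv
    have h1 := degIn_le_add (G := G) hAsub v
    have h2 := degIn_le_card (G := G) (R ∪ (A ∩ Y)) v
    have h3 := card_union_le R (A ∩ Y)
    have h4 := hmin v hv
    have h5 : (degIn G A v : ℝ) ≤ degIn G X v + (#R + #(A ∩ Y)) := by
      exact_mod_cast (by omega : degIn G A v ≤ degIn G X v + (#R + #(A ∩ Y)))
    linarith
  · have h1 := card_le_card hAsub
    have h2 := card_union_le X (R ∪ (A ∩ Y))
    have h3 := card_union_le R (A ∩ Y)
    have h5 : (#A : ℝ) ≤ #X + (#R + #(A ∩ Y)) := by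
      exact_mod_cast (by omega : #A ≤ #X + (#R + #(A ∩ Y)))
    linarith

end Stability

open Finset in
/-- A wheel-free graph of minimum degree almost `n / 2` splits into two almost equal parts, each
spanning a graph of small maximum degree. -/
lemma exists_partition (k : ℕ) {τ : ℝ} (hτ : 0 < τ) (hτ1 : τ ≤ 1 / 100) :
    ∃ ε > (0 : ℝ), ∃ n₀ : ℕ, ∀ (V : Type) [Fintype V] [DecidableEq V] (G : SimpleGraph V)
      [DecidableRel G.Adj], n₀ ≤ Fintype.card V → WheelFree G k →
      (∀ v, (1 / 2 - ε) * (Fintype.card V : ℝ) ≤ degIn G univ v) →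
      ∃ A B : Finset V, Disjoint A B ∧ A ∪ B = univ ∧
        (∀ v ∈ A, (degIn G A v : ℝ) ≤ τ * Fintype.card V) ∧
        (∀ v ∈ B, (degIn G B v : ℝ) ≤ τ * Fintype.card V) ∧
        (#A : ℝ) ≤ (1 / 2 + τ) * Fintype.card V ∧ (#B : ℝ) ≤ (1 / 2 + τ) * Fintype.card V := by
  set γ := τ ^ 2 / 100 with hγdef
  have hγ : 0 < γ := by positivity
  have hγ1 : γ ≤ τ / 10000 := by nlinarith
  obtain ⟨n₀, hn₀⟩ := exists_isEvenCycle_of_dense k hγ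
  refine ⟨γ, hγ, n₀ + 1, ?_⟩
  intro V _ _ G _ hcard hG hdeg
  set n : ℝ := (Fintype.card V : ℝ) with hn
  have hn0 : 0 < n := by rw [hn]; exact_mod_cast (by omega : 0 < Fintype.card V)
  have hnb : ∀ v, ∑ u ∈ univ.filter (G.Adj v), (degIn G (univ.filter (G.Adj v)) u : ℝ) ≤
      γ * n ^ 2 := by
    intro v
    by_contra! hcon
    obtain ⟨c, hc, hcm⟩ := hn₀ V G (by omega) _ hcon.le
    exact hG v c hc fun x hx => (mem_filter.1 (hcm x hx)).2
  have : Nonempty V := Fintype.card_pos_iff.1 (by omega)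
  obtain ⟨u⟩ := this
  set Y := univ.filter (G.Adj u) with hY
  have hYc : (1 / 2 - γ) * n ≤ #Y := hdeg u
  obtain ⟨w, hwY, hw⟩ : ∃ w ∈ Y, (degIn G Y w : ℝ) ≤ 3 * γ * n := by
    by_contra! hcon
    have h1 := card_nsmul_le_sum Y _ _ fun w hw => (hcon w hw).le
    rw [nsmul_eq_mul] at h1
    have h2 := hnb u
    have h3 : (1 / 2 - γ) * n * (3 * γ * n) ≤ #Y * (3 * γ * n) := by gcongr
    have h4 : 0 < γ * n ^ 2 := by positivity
    nlinarith
  set X := univ.filter (G.Adj w) \ Y with hX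
  have hXc : (1 / 2 - 4 * γ) * n ≤ #X := by
    have h1 : #X + #(univ.filter (G.Adj w) ∩ Y) = #(univ.filter (G.Adj w)) :=
      card_sdiff_add_card_inter _ _
    have h2 : univ.filter (G.Adj w) ∩ Y = Y.filter (G.Adj w) := by
      ext x
      simp [and_comm]
    have h3 : (#X + degIn G Y w : ℝ) = degIn G univ w := by
      unfold degIn
      rw [← h2, ← h1]
      push_cast
      rfl
    have := hdeg w
    linarith
  have hXY : Disjoint X Y := sdiff_disjoint
  have hXs : ∑ x ∈ X, (degIn G X x : ℝ) ≤ γ * n ^ 2 := by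
    refine le_trans ?_ (hnb w)
    have hsub : X ⊆ univ.filter (G.Adj w) := sdiff_subset
    refine (sum_le_sum fun x _ => ?_).trans
      (sum_le_sum_of_subset_of_nonneg hsub fun _ _ _ => Nat.cast_nonneg _)
    exact_mod_cast degIn_mono hsub x
  have hYs := hnb u
  have hdeg' : ∀ v, (1 / 2 - 4 * γ) * n ≤ degIn G univ v := fun v => by
    have := hdeg v
    nlinarith
  have hYc' : (1 / 2 - 4 * γ) * n ≤ #Y := by nlinarith
  have hpar : 4 * (4 * γ) + 2 * γ < (τ / 2) ^ 2 := by nlinarith [pow_pos hτ 2]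
  have hpar2 : τ / 2 + 3 * (4 * γ) < 3 / 10 := by linarith
  obtain ⟨h1, h2⟩ := near_half hn hn0 (by positivity : 0 < 4 * γ) (by positivity : 0 < τ / 2)
    hpar hpar2 hnb hdeg' X Y hXY hXc hYc' hXs hYs
    (univ.filter fun v => degIn G X v ≤ degIn G Y v) (fun v hv => (mem_filter.1 hv).2)
  obtain ⟨h3, h4⟩ := near_half hn hn0 (by positivity : 0 < 4 * γ) (by positivity : 0 < τ / 2)
    hpar hpar2 hnb hdeg' Y X hXY.symm hYc' hXc hYs hXs
    (univ.filter fun v => ¬ degIn G X v ≤ degIn G Y v)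
    (fun v hv => (not_le.1 (mem_filter.1 hv).2).le)
  refine ⟨univ.filter fun v => degIn G X v ≤ degIn G Y v,
    univ.filter fun v => ¬ degIn G X v ≤ degIn G Y v, disjoint_filter_filter_not _ _ _,
    filter_union_filter_not_eq _ _, ?_, ?_, ?_, ?_⟩
  · exact fun v hv => (h1 v hv).trans (mul_le_mul_of_nonneg_right (by linarith) hn0.le)
  · exact fun v hv => (h3 v hv).trans (mul_le_mul_of_nonneg_right (by linarith) hn0.le)
  · exact h2.trans (mul_le_mul_of_nonneg_right (by linarith) hn0.le)
  · exact h4.trans (mul_le_mul_of_nonneg_right (by linarith) hn0.le)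

/-! ### Two nearly complete parts -/

section Cfg

open Finset

variable {V : Type*} [DecidableEq V] {G : SimpleGraph V} [DecidableRel G.Adj]

/-- A wheel-free graph whose vertex set splits into two large parts `A` and `B` such that every
vertex misses at most `s` vertices of the opposite part. -/
structure Cfg [Fintype V] (G : SimpleGraph V) [DecidableRel G.Adj] (k s : ℕ) (A B : Finset V) :
    Prop where
  free : WheelFree G k
  disj : Disjoint A B
  cover : A ∪ B = univ
  missA : ∀ v ∈ A, #{u ∈ B | ¬ G.Adj v u} ≤ s
  missB : ∀ u ∈ B, #{v ∈ A | ¬ G.Adj u v} ≤ s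
  bigA : (k + 1) * s + 2 * k ≤ #A
  bigB : (k + 1) * s + 2 * k ≤ #B

/-- The vertices of `B` missing some vertex of `T`. -/
def badSet (G : SimpleGraph V) [DecidableRel G.Adj] (B T : Finset V) : Finset V :=
  T.biUnion fun w => {u ∈ B | ¬ G.Adj w u}

/-- The closed neighbourhood of `x` inside `Y`, for `x ∈ Y`. -/
def closedNb (G : SimpleGraph V) [DecidableRel G.Adj] (Y : Finset V) (x : V) : Finset V :=
  insert x {u ∈ Y | G.Adj x u}

lemma mem_closedNb {Y : Finset V} {x y : V} :
    y ∈ closedNb G Y x ↔ y = x ∨ (y ∈ Y ∧ G.Adj x y) := by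
  simp [closedNb]

lemma card_closedNb_le {Y : Finset V} {x : V} : #(closedNb G Y x) ≤ degIn G Y x + 1 :=
  card_insert_le _ _

/-- Greedy choice: from a large subset of a graph of bounded degree one can pick `t` vertices with
pairwise disjoint closed neighbourhoods avoiding a given set. -/
lemma exists_scattered (Y : Finset V) (D : ℕ) (hD : ∀ v ∈ Y, degIn G Y v ≤ D)
    (X : Finset V) (hX : X ⊆ Y) (t : ℕ) : ∀ U : Finset V,
      (D + 1) * (#U + t * (D + 1)) < #X →
      ∃ l : List V, l.length = t ∧ (∀ x ∈ l, x ∈ X) ∧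
        l.Pairwise (fun x y => Disjoint (closedNb G Y x) (closedNb G Y y)) ∧
        ∀ x ∈ l, Disjoint (closedNb G Y x) U := by
  induction t with
  | zero => exact fun U _ => ⟨[], by simp⟩
  | succ t ih =>
    intro U hU
    obtain ⟨x, hxX, hx⟩ : ∃ x ∈ X, Disjoint (closedNb G Y x) U := by
      by_contra! hcon
      have hsub : X ⊆ (U ∩ Y).biUnion (closedNb G Y) := by
        intro x hx
        obtain ⟨u, hu1, hu2⟩ := not_disjoint_iff.1 (hcon x hx)
        rw [mem_biUnion]
        rcases mem_closedNb.1 hu1 with rfl | ⟨h1, h2⟩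
        · exact ⟨u, mem_inter.2 ⟨hu2, hX hx⟩, mem_closedNb.2 (Or.inl rfl)⟩
        · exact ⟨u, mem_inter.2 ⟨hu2, h1⟩, mem_closedNb.2 (Or.inr ⟨hX hx, h2.symm⟩)⟩
      have h1 := card_le_card hsub
      have h2 : #((U ∩ Y).biUnion (closedNb G Y)) ≤ #(U ∩ Y) * (D + 1) :=
        card_biUnion_le_card_mul _ _ _ fun u hu =>
          card_closedNb_le.trans (Nat.add_le_add_right (hD u (mem_inter.1 hu).2) 1)
      have h3 : #(U ∩ Y) ≤ #U := card_le_card inter_subset_left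
      have h4 : #(U ∩ Y) * (D + 1) ≤ #U * (D + 1) := Nat.mul_le_mul_right _ h3
      have h5 : (D + 1) * #U ≤ (D + 1) * (#U + (t + 1) * (D + 1)) :=
        Nat.mul_le_mul_left _ (Nat.le_add_right _ _)
      rw [mul_comm] at h4
      linarith
    obtain ⟨l, hl1, hl2, hl3, hl4⟩ := ih (U ∪ closedNb G Y x) (by
      have h1 := card_union_le U (closedNb G Y x)
      have h2 : #(closedNb G Y x) ≤ D + 1 :=
        card_closedNb_le.trans (Nat.add_le_add_right (hD x (hX hxX)) 1)
      have h3 : (D + 1) * (#(U ∪ closedNb G Y x) + t * (D + 1)) ≤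
          (D + 1) * (#U + (t + 1) * (D + 1)) := Nat.mul_le_mul_left _ (by nlinarith)
      omega)
    refine ⟨x :: l, by simp [hl1], ?_, ?_, ?_⟩
    · rintro y hy
      rcases List.mem_cons.1 hy with rfl | hy
      · exact hxX
      · exact hl2 y hy
    · rw [List.pairwise_cons]
      exact ⟨fun y hy => ((disjoint_union_right.1 (hl4 y hy)).2).symm, hl3⟩
    · rintro y hy
      rcases List.mem_cons.1 hy with rfl | hy
      · exact hx
      · exact (disjoint_union_right.1 (hl4 y hy)).1

omit [DecidableEq V] in
lemma exists_two_nbrs {Y : Finset V} {y : V} (h : 2 ≤ degIn G Y y) :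
    ∃ x ∈ Y, ∃ z ∈ Y, x ≠ z ∧ G.Adj y x ∧ G.Adj y z := by
  obtain ⟨x, hx, z, hz, hxz⟩ := one_lt_card.1 (h : 1 < #{u ∈ Y | G.Adj y u})
  rw [mem_filter] at hx hz
  exact ⟨x, hx.1, z, hz.1, hxz, hx.2, hz.2⟩

omit [DecidableEq V] in
lemma exists_nbr {Y : Finset V} {y : V} (h : 1 ≤ degIn G Y y) : ∃ x ∈ Y, G.Adj y x := by
  obtain ⟨x, hx⟩ := card_pos.1 (h : 0 < #{u ∈ Y | G.Adj y u})
  rw [mem_filter] at hx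
  exact ⟨x, hx.1, hx.2⟩

omit [DecidableEq V] in
lemma sum_degIn_comm (X Y : Finset V) :
    ∑ x ∈ X, degIn G Y x = ∑ y ∈ Y, degIn G X y := by
  have := sum_card_bipartiteAbove_eq_sum_card_bipartiteBelow (s := X) (t := Y) (fun x y => G.Adj x y)
  unfold bipartiteAbove bipartiteBelow at this
  unfold degIn
  rw [this]
  simp_rw [G.adj_comm]

namespace Cfg

variable [Fintype V] {k s : ℕ} {A B : Finset V}

lemma symm (h : Cfg G k s A B) : Cfg G k s B A :=
  ⟨h.free, h.disj.symm, by rw [union_comm]; exact h.cover, h.missB, h.missA, h.bigB, h.bigA⟩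

lemma card_badSet (h : Cfg G k s A B) {T : Finset V} (hT : T ⊆ A) :
    #(badSet G B T) ≤ #T * s :=
  card_biUnion_le_card_mul _ _ _ fun w hw => h.missA w (hT hw)

omit [Fintype V] in
lemma adj_of_notMem_badSet {T : Finset V} {w u : V} (hw : w ∈ T) (hu : u ∈ B)
    (hub : u ∉ badSet G B T) : G.Adj w u := by
  by_contra hcon
  exact hub (mem_biUnion.2 ⟨w, hw, mem_filter.2 ⟨hu, hcon⟩⟩)

/-- A star in `A` and path segments in `B` that are completely joined to it cannot be combined
into a wheel. -/
lemma no_segments (h : Cfg G k s A B) {v : V} (hv : v ∈ A) {S : Finset V} (hS : S ⊆ A)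
    (hSv : ∀ a ∈ S, G.Adj v a) (hSk : #S ≤ k) (Ts : List (List V)) (hne : ∀ T ∈ Ts, T ≠ [])
    (hch : ∀ T ∈ Ts, T.IsChain G.Adj) (hnd : Ts.flatten.Nodup)
    (hT : ∀ x ∈ Ts.flatten, x ∈ B ∧ x ∉ badSet G B (insert v S)) (hlen : Ts.length ≤ #S)
    (hk : Ts.flatten.length + (#S - Ts.length) + #S = 2 * k) : False := by
  have hsub : insert v S ⊆ A := insert_subset hv hS
  have hc1 : #(insert v S) ≤ k + 1 := (card_insert_le _ _).trans (by omega)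
  refine h.free.no_segments v S (B \ badSet G B (insert v S)) hSv ?_ ?_ ?_ Ts hne hch hnd
    (fun x hx => mem_sdiff.2 (hT x hx)) hlen hk
  · exact fun x hx => adj_of_notMem_badSet (mem_insert_self _ _) (mem_sdiff.1 hx).1
      (mem_sdiff.1 hx).2
  · exact fun a ha x hx => adj_of_notMem_badSet (mem_insert_of_mem ha) (mem_sdiff.1 hx).1
      (mem_sdiff.1 hx).2
  · have h1 := h.card_badSet hsub
    have h2 : #(insert v S) * s ≤ (k + 1) * s := Nat.mul_le_mul_right _ hc1
    have h3 := le_card_sdiff (badSet G B (insert v S)) B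
    have := h.bigB
    omega

omit [DecidableEq V] [Fintype V] in
lemma exists_star (v : V) {a : ℕ} (ha : a ≤ degIn G A v) :
    ∃ S ⊆ A, (∀ w ∈ S, G.Adj v w) ∧ #S = a := by
  obtain ⟨S, hS, hSc⟩ := exists_subset_card_eq ha
  exact ⟨S, hS.trans (filter_subset _ _), fun w hw => (mem_filter.1 (hS hw)).2, hSc⟩

lemma degIn_le (h : Cfg G k s A B) {v : V} (hv : v ∈ A) : degIn G A v ≤ k - 1 := by
  by_contra! hcon
  obtain ⟨S, hS, hSv, hSc⟩ := exists_star (G := G) (A := A) v (a := k) (by omega)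
  exact h.no_segments hv hS hSv hSc.le [] (by simp) (by simp) (by simp) (by simp) (by simp)
    (by simp [hSc]; omega)

/-- The common neighbourhood in `B` of a star with `k - 1` leaves in `A` spans at most one edge. -/
lemma sum_le_two (h : Cfg G k s A B) (hk : 3 ≤ k) {v : V} (hv : v ∈ A) {S : Finset V}
    (hS : S ⊆ A) (hSv : ∀ a ∈ S, G.Adj v a) (hSk : #S = k - 1) :
    ∑ x ∈ B \ badSet G B (insert v S), degIn G (B \ badSet G B (insert v S)) x ≤ 2 := by
  set W := B \ badSet G B (insert v S) with hW
  have hWm : ∀ x ∈ W, x ∈ B ∧ x ∉ badSet G B (insert v S) := fun x hx => mem_sdiff.1 hx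
  have hle1 : ∀ y ∈ W, degIn G W y ≤ 1 := by
    intro y hy
    by_contra! hcon
    obtain ⟨x, hx, z, hz, hxz, hyx, hyz⟩ := exists_two_nbrs hcon
    refine h.no_segments hv hS hSv (by omega) [[x, y, z]] (by simp) ?_ ?_ ?_
      (by rw [hSk, List.length_singleton]; omega) (by simp [hSk]; omega)
    · simp [hyx.symm, hyz]
    · simp [hxz, hyx.ne', hyz.ne]
    · simp only [List.flatten_cons, List.flatten_nil, List.append_nil, List.mem_cons,
        List.not_mem_nil, or_false]
      rintro w (rfl | rfl | rfl) <;> exact hWm _ ‹_›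
  by_contra! hcon
  have hbig : 2 < #{x ∈ W | 1 ≤ degIn G W x} := by
    refine lt_of_lt_of_le hcon ?_
    rw [card_filter]
    refine sum_le_sum fun x hx => ?_
    have := hle1 x hx
    split_ifs <;> omega
  obtain ⟨y, hy⟩ : {x ∈ W | 1 ≤ degIn G W x}.Nonempty := card_pos.1 (by omega)
  rw [mem_filter] at hy
  obtain ⟨y', hy', hyy⟩ := exists_nbr hy.2
  obtain ⟨z, hz, hzn⟩ : ∃ z ∈ {x ∈ W | 1 ≤ degIn G W x}, z ∉ ({y, y'} : Finset V) := by
    by_contra! hc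
    have := card_le_card (show {x ∈ W | 1 ≤ degIn G W x} ⊆ ({y, y'} : Finset V) from hc)
    have := card_le_two (a := y) (b := y')
    omega
  rw [mem_filter] at hz
  obtain ⟨z', hz', hzz⟩ := exists_nbr hz.2
  simp only [mem_insert, mem_singleton, not_or] at hzn
  have huniq : ∀ a ∈ W, ∀ b ∈ W, ∀ c ∈ W, G.Adj a b → G.Adj a c → b = c := by
    intro a ha b hb c hc hab hac
    exact card_le_one.1 (hle1 a ha) b (mem_filter.2 ⟨hb, hab⟩) c (mem_filter.2 ⟨hc, hac⟩)
  have h1 : z' ≠ y := by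
    rintro rfl
    exact hzn.2 (huniq _ hz' _ hz.1 _ hy' hzz.symm hyy)
  have h2 : z' ≠ y' := by
    rintro rfl
    exact hzn.1 (huniq _ hz' _ hz.1 _ hy.1 hzz.symm hyy.symm)
  refine h.no_segments hv hS hSv (by omega) [[y, y'], [z, z']] (by simp) ?_ ?_ ?_
    (by simp; omega) (by simp [hSk]; omega)
  · simp [hyy, hzz]
  · simp [hyy.ne, hzz.ne, Ne.symm hzn.1, Ne.symm hzn.2, h1.symm, h2.symm]
  · simp only [List.flatten_cons, List.flatten_nil, List.append_nil, List.mem_cons,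
      List.cons_append, List.nil_append, List.not_mem_nil, or_false]
    rintro w (rfl | rfl | rfl | rfl)
    exacts [hWm _ hy.1, hWm _ hy', hWm _ hz.1, hWm _ hz']

/-- If `A` contains a star with `k - 1` leaves, then few vertices of `B` have a neighbour
in `B`. -/
lemma card_pos_degIn_le (h : Cfg G k s A B) (hk : 3 ≤ k) {v : V} (hv : v ∈ A)
    (hd : k - 1 ≤ degIn G A v) :
    #{u ∈ B | 1 ≤ degIn G B u} ≤ k * ((k + 1) * s + k * k) := by
  obtain ⟨S, hS, hSv, hSc⟩ := exists_star (G := G) (A := A) v hd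
  have h2 := h.sum_le_two hk hv hS hSv hSc
  set U := badSet G B (insert v S) with hU
  have hUc : #U ≤ k * s := by
    refine (h.card_badSet (insert_subset hv hS)).trans (Nat.mul_le_mul_right _ ?_)
    exact (card_insert_le _ _).trans (by omega)
  have hUB : U ⊆ B := by
    intro u hu
    obtain ⟨w, -, hw⟩ := mem_biUnion.1 hu
    exact (mem_filter.1 hw).1
  have hsub : {u ∈ B | 1 ≤ degIn G B u} ⊆
      U.biUnion (closedNb G B) ∪ {u ∈ B \ U | 1 ≤ degIn G (B \ U) u} := by
    intro u hu
    rw [mem_filter] at hu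
    obtain ⟨x, hx, hux⟩ := exists_nbr hu.2
    rw [mem_union, mem_biUnion]
    by_cases hxU : x ∈ U
    · exact Or.inl ⟨x, hxU, mem_closedNb.2 (Or.inr ⟨hu.1, hux.symm⟩)⟩
    · by_cases huU : u ∈ U
      · exact Or.inl ⟨u, huU, mem_closedNb.2 (Or.inl rfl)⟩
      · right
        rw [mem_filter]
        refine ⟨mem_sdiff.2 ⟨hu.1, huU⟩, card_pos.2 ⟨x, ?_⟩⟩
        exact mem_filter.2 ⟨mem_sdiff.2 ⟨hx, hxU⟩, hux⟩
  have h3 := (card_le_card hsub).trans (card_union_le _ _)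
  have h4 : #(U.biUnion (closedNb G B)) ≤ #U * k := by
    refine card_biUnion_le_card_mul _ _ _ fun u hu => card_closedNb_le.trans ?_
    have := h.symm.degIn_le (hUB hu)
    omega
  have h5 : #{u ∈ B \ U | 1 ≤ degIn G (B \ U) u} ≤ 2 := by
    refine le_trans ?_ h2
    rw [card_filter]
    refine sum_le_sum fun x _ => ?_
    split_ifs <;> omega
  have h6 : #U * k ≤ k * s * k := Nat.mul_le_mul_right _ hUc
  nlinarith

omit [Fintype V] in
lemma flatten_map_nodup {l : List V} {f : V → List V}
    (hf : ∀ x ∈ l, (f x).Nodup) (hsub : ∀ x ∈ l, ∀ y ∈ f x, y ∈ closedNb G B x)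
    (hl : l.Pairwise (fun x y => Disjoint (closedNb G B x) (closedNb G B y))) :
    (l.map f).flatten.Nodup := by
  rw [List.nodup_flatten]
  constructor
  · intro T hT
    obtain ⟨x, hx, rfl⟩ := List.mem_map.1 hT
    exact hf x hx
  · rw [List.pairwise_map]
    refine List.Pairwise.imp_of_mem ?_ hl
    intro x y hx hy hxy z hzx hzy
    exact disjoint_left.1 hxy (hsub x hx z hzx) (hsub y hy z hzy)

/-- If `A` contains a star with at least `k / 2` leaves, then few vertices of `B` have two
neighbours in `B`. -/
lemma card_two_degIn_le (h : Cfg G k s A B) (hk : 3 ≤ k) {v : V} (hv : v ∈ A)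
    (hd : k ≤ 2 * degIn G A v) :
    #{u ∈ B | 2 ≤ degIn G B u} ≤ k * ((k + 1) * s + k * k) := by
  by_contra! hcon
  obtain ⟨S, hS, hSv, hSc⟩ := exists_star (G := G) (A := A) v le_rfl
  have hSk := h.degIn_le hv
  have hUc : #(badSet G B (insert v S)) ≤ (k + 1) * s := by
    refine (h.card_badSet (insert_subset hv hS)).trans (Nat.mul_le_mul_right _ ?_)
    exact (card_insert_le _ _).trans (by omega)
  obtain ⟨l, hl1, hl2, hl3, hl4⟩ := exists_scattered (G := G) B (k - 1)
    (fun u hu => h.symm.degIn_le hu) {u ∈ B | 2 ≤ degIn G B u} (filter_subset _ _) (k - #S)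
    (badSet G B (insert v S)) (by
      refine lt_of_le_of_lt ?_ hcon
      rw [show k - 1 + 1 = k by omega]
      gcongr
      omega)
  have hch : ∀ y : V, ∃ T : List V, y ∈ l → T.IsChain G.Adj ∧ T.Nodup ∧ T.length = 3 ∧
      ∀ x ∈ T, x ∈ closedNb G B y := by
    intro y
    by_cases hy : y ∈ l
    · obtain ⟨x, hx, z, hz, hxz, hyx, hyz⟩ := exists_two_nbrs (mem_filter.1 (hl2 y hy)).2
      refine ⟨[x, y, z], fun _ => ⟨?_, ?_, rfl, ?_⟩⟩
      · simp [hyx.symm, hyz]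
      · simp [hxz, hyx.ne', hyz.ne]
      · simp only [List.mem_cons, List.not_mem_nil, or_false, mem_closedNb]
        rintro w (rfl | rfl | rfl)
        exacts [Or.inr ⟨hx, hyx⟩, Or.inl rfl, Or.inr ⟨hz, hyz⟩]
    · exact ⟨[], fun h => absurd h hy⟩
  choose f hf using hch
  have hflen : (l.map f).flatten.length = 3 * (k - #S) := by
    have : List.map (List.length ∘ f) l = List.map (fun _ => 3) l :=
      List.map_congr_left fun x hx => (hf x hx).2.2.1
    rw [List.length_flatten, List.map_map, this, List.map_const', List.sum_replicate, hl1]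
    simp [mul_comm]
  refine h.no_segments hv hS hSv (by omega) (l.map f) ?_ ?_ ?_ ?_ ?_ ?_
  · intro T hT
    obtain ⟨x, hx, rfl⟩ := List.mem_map.1 hT
    have := (hf x hx).2.2.1
    rintro h0
    simp [h0] at this
  · intro T hT
    obtain ⟨x, hx, rfl⟩ := List.mem_map.1 hT
    exact (hf x hx).1
  · exact flatten_map_nodup (fun x hx => (hf x hx).2.1) (fun x hx => (hf x hx).2.2.2) hl3
  · intro x hx
    obtain ⟨T, hT, hxT⟩ := List.mem_flatten.1 hx
    obtain ⟨y, hy, rfl⟩ := List.mem_map.1 hT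
    have hxc := (hf y hy).2.2.2 x hxT
    refine ⟨?_, disjoint_left.1 (hl4 y hy) hxc⟩
    rcases mem_closedNb.1 hxc with rfl | h1
    · exact (mem_filter.1 (hl2 _ hy)).1
    · exact h1.1
  · rw [List.length_map, hl1]
    omega
  · rw [hflen, List.length_map, hl1]
    omega

/-- If `A` contains many stars with `k - 2` leaves and `B` spans a path on three vertices, then
few vertices of `B` have a neighbour in `B`. -/
lemma card_pos_degIn_le_of_path (h : Cfg G k s A B) (hk : 5 ≤ k)
    (hA : k * ((k + 1) * s + k * k) < #{v ∈ A | k - 2 ≤ degIn G A v})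
    {y : V} (hy : y ∈ B) (hd : 2 ≤ degIn G B y) :
    #{u ∈ B | 1 ≤ degIn G B u} ≤ k * ((k + 1) * s + k * k) := by
  by_contra! hcon
  obtain ⟨x, hx, z, hz, hxz, hyx, hyz⟩ := exists_two_nbrs hd
  set P : Finset V := {x, y, z} with hP
  have hPc : #P ≤ 3 := card_le_three
  have hPB : P ⊆ B := by
    intro w hw
    simp only [hP, mem_insert, mem_singleton] at hw
    rcases hw with rfl | rfl | rfl <;> assumption
  have hPbad : #(badSet G A P) ≤ 3 * s :=
    (h.symm.card_badSet hPB).trans (Nat.mul_le_mul_right _ hPc)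
  obtain ⟨l, hl1, hl2, -, hl4⟩ := exists_scattered (G := G) A (k - 1)
    (fun u hu => h.degIn_le hu) {v ∈ A | k - 2 ≤ degIn G A v} (filter_subset _ _) 1
    (badSet G A P) (by
      refine lt_of_le_of_lt ?_ hA
      rw [show k - 1 + 1 = k by omega]
      gcongr
      · exact hPbad.trans (Nat.mul_le_mul_right _ (by omega))
      · omega)
  obtain ⟨v, rfl⟩ := List.length_eq_one_iff.1 hl1
  have hv := mem_filter.1 (hl2 v (by simp))
  have hvd := hl4 v (by simp)
  obtain ⟨S, hS, hSv, hSc⟩ := exists_star (G := G) (A := A) v hv.2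
  have hSP : ∀ w ∈ P, w ∉ badSet G B (insert v S) := by
    intro w hw hbad
    obtain ⟨a, ha, haw⟩ := mem_biUnion.1 hbad
    rw [mem_filter] at haw
    have haA : a ∈ A := insert_subset hv.1 hS ha
    refine Finset.disjoint_left.1 hvd (?_ : a ∈ _) (mem_biUnion.2 ⟨w, hw, mem_filter.2 ⟨haA, ?_⟩⟩)
    · rcases mem_insert.1 ha with rfl | ha
      · exact mem_closedNb.2 (Or.inl rfl)
      · exact mem_closedNb.2 (Or.inr ⟨haA, hSv a ha⟩)
    · exact fun hadj => haw.2 hadj.symm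
  have hUc : #(badSet G B (insert v S)) ≤ (k + 1) * s := by
    refine (h.card_badSet (insert_subset hv.1 hS)).trans (Nat.mul_le_mul_right _ ?_)
    exact (card_insert_le _ _).trans (by omega)
  obtain ⟨l', hm1, hm2, hm3, hm4⟩ := exists_scattered (G := G) B (k - 1)
    (fun u hu => h.symm.degIn_le hu) {u ∈ B | 1 ≤ degIn G B u} (filter_subset _ _) 2
    (badSet G B (insert v S) ∪ P) (by
      refine lt_of_le_of_lt ?_ hcon
      rw [show k - 1 + 1 = k by omega]
      have h1 := card_union_le (badSet G B (insert v S)) P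
      have h2 : 5 * k ≤ k * k := Nat.mul_le_mul_right _ hk
      refine Nat.mul_le_mul_left _ ?_
      omega)
  obtain ⟨p, r, rfl⟩ := List.length_eq_two.1 hm1
  have hp := mem_filter.1 (hm2 p (by simp))
  have hr := mem_filter.1 (hm2 r (by simp))
  obtain ⟨q, hq, hpq⟩ := exists_nbr hp.2
  obtain ⟨t, ht, hrt⟩ := exists_nbr hr.2
  have hpr : Disjoint (closedNb G B p) (closedNb G B r) := by simpa using hm3
  have hpd := disjoint_union_right.1 (hm4 p (by simp))
  have hrd := disjoint_union_right.1 (hm4 r (by simp))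
  have mp : p ∈ closedNb G B p := mem_closedNb.2 (Or.inl rfl)
  have mq : q ∈ closedNb G B p := mem_closedNb.2 (Or.inr ⟨hq, hpq⟩)
  have mr : r ∈ closedNb G B r := mem_closedNb.2 (Or.inl rfl)
  have mt : t ∈ closedNb G B r := mem_closedNb.2 (Or.inr ⟨ht, hrt⟩)
  have mx : x ∈ P := by simp [hP]
  have my : y ∈ P := by simp [hP]
  have mz : z ∈ P := by simp [hP]
  have dis : ∀ {C D : Finset V} {a b : V}, Disjoint C D → a ∈ C → b ∈ D → b ≠ a := by
    rintro C D a b hCD ha hb rfl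
    exact disjoint_left.1 hCD ha hb
  refine h.no_segments hv.1 hS hSv (by omega) [[x, y, z], [p, q], [r, t]] (by simp) ?_ ?_ ?_
    (by simp; omega) (by simp [hSc]; omega)
  · simp [hyx.symm, hyz, hpq, hrt]
  · simp [hxz, hyx.ne', hyz.ne, hpq.ne, hrt.ne, dis hpd.2 mp mx, dis hpd.2 mq mx, dis hrd.2 mr mx,
      dis hrd.2 mt mx, dis hpd.2 mp my, dis hpd.2 mq my, dis hrd.2 mr my,
      dis hrd.2 mt my, dis hpd.2 mp mz, dis hpd.2 mq mz, dis hrd.2 mr mz,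
      dis hrd.2 mt mz, dis hpr.symm mr mp, dis hpr.symm mt mp, dis hpr.symm mr mq,
      dis hpr.symm mt mq]
  · simp only [List.flatten_cons, List.flatten_nil, List.append_nil, List.mem_cons,
      List.cons_append, List.nil_append, List.not_mem_nil, or_false]
    rintro w (rfl | rfl | rfl | rfl | rfl | rfl | rfl)
    exacts [⟨hx, hSP _ mx⟩, ⟨hy, hSP _ my⟩, ⟨hz, hSP _ mz⟩, ⟨hp.1, disjoint_left.1 hpd.1 mp⟩,
      ⟨hq, disjoint_left.1 hpd.1 mq⟩, ⟨hr.1, disjoint_left.1 hrd.1 mr⟩,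
      ⟨ht, disjoint_left.1 hrd.1 mt⟩]

/-- Twice the number of edges, up to the pairs missing between the two parts. -/
lemma two_mul_card_edges (h : Cfg G k s A B) :
    2 * #G.edgeFinset + 2 * ∑ v ∈ A, #{u ∈ B | ¬ G.Adj v u} =
      ∑ v ∈ A, degIn G A v + ∑ v ∈ B, degIn G B v + 2 * (#A * #B) := by
  have h1 : ∀ v, G.degree v = degIn G A v + degIn G B v := by
    intro v
    rw [← degIn_union h.disj, h.cover]
    unfold degIn
    rw [← card_neighborFinset_eq_degree, neighborFinset_eq_filter]
  have h2 : ∑ v ∈ A, #{u ∈ B | ¬ G.Adj v u} + ∑ v ∈ A, degIn G B v = #A * #B := by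
    rw [← sum_add_distrib, ← smul_eq_mul, ← sum_const]
    refine sum_congr rfl fun v _ => ?_
    rw [add_comm]
    exact card_filter_add_card_filter_not _
  have h3 : ∑ v ∈ A, degIn G B v = ∑ v ∈ B, degIn G A v := sum_degIn_comm A B
  rw [← G.sum_degrees_eq_twice_card_edges, ← h.cover, sum_union h.disj]
  simp_rw [h1]
  rw [sum_add_distrib, sum_add_distrib]
  omega

/-- If `A` contains many stars with `k - 1` leaves, then every edge inside `B` beyond the first is
paid for by a missing pair between the parts. -/
lemma sum_degIn_le_of_many (h : Cfg G k s A B) (hk : 3 ≤ k)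
    (hA : k * (k * k) < #{v ∈ A | k - 1 ≤ degIn G A v}) :
    ∑ v ∈ B, degIn G B v ≤ 2 + 2 * ∑ v ∈ A, #{u ∈ B | ¬ G.Adj v u} := by
  obtain ⟨l, hl1, hl2, hl3, -⟩ := exists_scattered (G := G) A (k - 1)
    (fun u hu => h.degIn_le hu) {v ∈ A | k - 1 ≤ degIn G A v} (filter_subset _ _) (k - 1)
    ∅ (by
      refine lt_of_le_of_lt ?_ hA
      rw [show k - 1 + 1 = k by omega, card_empty, zero_add]
      gcongr
      omega)
  have hnd : l.Nodup := by
    refine hl3.imp ?_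
    rintro x y hxy rfl
    exact disjoint_left.1 hxy (mem_closedNb.2 (Or.inl rfl)) (mem_closedNb.2 (Or.inl rfl))
  have hone : ∀ v ∈ l.toFinset, ∑ u ∈ B, degIn G B u ≤
      2 + 2 * (k - 1) * ∑ w ∈ closedNb G A v, #{u ∈ B | ¬ G.Adj w u} := by
    intro v hv
    rw [List.mem_toFinset] at hv
    have hv' := mem_filter.1 (hl2 v hv)
    have hdv : #(A.filter (G.Adj v)) = k - 1 := le_antisymm (h.degIn_le hv'.1) hv'.2
    have h2 := h.sum_le_two hk hv'.1 (filter_subset _ A)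
      (fun a ha => (mem_filter.1 ha).2) hdv
    change ∑ x ∈ B \ badSet G B (closedNb G A v), degIn G (B \ badSet G B (closedNb G A v)) x ≤ 2
      at h2
    set U := badSet G B (closedNb G A v) with hU
    have hUB : U ⊆ B := by
      intro u hu
      obtain ⟨w, -, hw⟩ := mem_biUnion.1 hu
      exact (mem_filter.1 hw).1
    have hUc : #U ≤ ∑ w ∈ closedNb G A v, #{u ∈ B | ¬ G.Adj w u} := card_biUnion_le
    have hUs : ∑ u ∈ U, degIn G B u ≤ (k - 1) * #U := by
      rw [mul_comm, ← smul_eq_mul]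
      exact sum_le_card_nsmul _ _ _ fun u hu => h.symm.degIn_le (hUB hu)
    have hsplit : ∑ u ∈ B, degIn G B u = ∑ u ∈ B \ U, degIn G B u + ∑ u ∈ U, degIn G B u :=
      (sum_sdiff hUB).symm
    have hsplit2 : ∑ u ∈ B \ U, degIn G B u ≤
        ∑ u ∈ B \ U, degIn G (B \ U) u + ∑ u ∈ B \ U, degIn G U u := by
      rw [← sum_add_distrib]
      exact sum_le_sum fun u _ => degIn_le_add (by rw [sdiff_union_of_subset hUB]) u
    have hcross : ∑ u ∈ B \ U, degIn G U u ≤ ∑ u ∈ U, degIn G B u := by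
      rw [sum_degIn_comm]
      exact sum_le_sum fun u _ => degIn_mono sdiff_subset u
    have : (k - 1) * #U ≤ (k - 1) * ∑ w ∈ closedNb G A v, #{u ∈ B | ¬ G.Adj w u} :=
      Nat.mul_le_mul_left _ hUc
    rw [mul_assoc]
    omega
  have hsum := sum_le_sum hone
  rw [sum_const, List.toFinset_card_of_nodup hnd, hl1, smul_eq_mul, sum_add_distrib, sum_const,
    List.toFinset_card_of_nodup hnd, hl1, smul_eq_mul, ← mul_sum, ← sum_biUnion] at hsum
  · have hle : ∑ w ∈ l.toFinset.biUnion (closedNb G A), #{u ∈ B | ¬ G.Adj w u} ≤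
        ∑ v ∈ A, #{u ∈ B | ¬ G.Adj v u} := by
      refine sum_le_sum_of_subset ?_
      intro w hw
      obtain ⟨v, hv, hwv⟩ := mem_biUnion.1 hw
      rw [List.mem_toFinset] at hv
      rcases mem_closedNb.1 hwv with rfl | h1
      · exact (mem_filter.1 (hl2 _ hv)).1
      · exact h1.1
    have h1 : (k - 1) * ∑ u ∈ B, degIn G B u ≤
        (k - 1) * (2 + 2 * ∑ v ∈ A, #{u ∈ B | ¬ G.Adj v u}) := by
      refine hsum.trans ?_
      have := Nat.mul_le_mul_left (2 * (k - 1)) hle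
      nlinarith
    exact Nat.le_of_mul_le_mul_left h1 (by omega)
  · intro x hx y hy hxy
    have hx' : x ∈ l := by simpa using hx
    have hy' : y ∈ l := by simpa using hy
    have hsym : ∀ a b, Disjoint (closedNb G A a) (closedNb G A b) →
        Disjoint (closedNb G A b) (closedNb G A a) := fun a b hab => hab.symm
    have : Std.Symm (fun a b => Disjoint (closedNb G A a) (closedNb G A b)) := ⟨hsym⟩
    exact hl3.forall hx' hy' hxy

end Cfg

end Cfg

/-! ### The extremal function -/

section Extremal

open Finset

/-- The maximum of `p (n - p) + ⌊(k - 1) p / 2⌋` over `0 ≤ p ≤ n`. -/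
def extremal (k n : ℕ) : ℕ :=
  (range (n + 1)).sup (fun p => p * (n - p) + (k - 1) * p / 2)

lemma le_extremal {k n p q : ℕ} (h : p + q = n) : p * q + (k - 1) * p / 2 ≤ extremal k n := by
  have := le_sup (f := fun p => p * (n - p) + (k - 1) * p / 2)
    (mem_range.2 (by omega : p < n + 1))
  rw [← h, Nat.add_sub_cancel_left] at this
  rw [← h]
  exact this

lemma exists_eq_extremal (k n : ℕ) :
    ∃ p ≤ n, extremal k n = p * (n - p) + (k - 1) * p / 2 := by
  obtain ⟨p, hp, h⟩ := exists_mem_eq_sup (range (n + 1)) ⟨0, by simp⟩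
    (fun p => p * (n - p) + (k - 1) * p / 2)
  exact ⟨p, by rw [mem_range] at hp; omega, h⟩

lemma extremal_succ (k m : ℕ) : 2 * extremal k m + m ≤ 2 * extremal k (m + 1) := by
  obtain ⟨p, hp, h⟩ := exists_eq_extremal k m
  obtain ⟨q, rfl⟩ := Nat.exists_eq_add_of_le hp
  rw [Nat.add_sub_cancel_left] at h
  have h1 := le_extremal (k := k) (p := p) (q := q + 1) (n := p + q + 1) (by omega)
  have h2 := le_extremal (k := k) (p := p + 1) (q := q) (n := p + q + 1) (by omega)
  have h3 : (k - 1) * p / 2 ≤ (k - 1) * (p + 1) / 2 :=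
    Nat.div_le_div_right (Nat.mul_le_mul_left _ (by omega))
  have e1 : p * (q + 1) = p * q + p := by ring
  have e2 : (p + 1) * q = p * q + q := by ring
  omega

/-- Evaluating at the integer nearest to the real maximiser `n / 2 + (k - 1) / 4`. -/
lemma extremal_ge {k n : ℕ} (hk : 1 ≤ k) (hn : k + 2 ≤ n) :
    ((n : ℝ) / 2 + ((k : ℝ) - 1) / 4) ^ 2 - 3 / 4 ≤ extremal k n := by
  have hk' : (1 : ℝ) ≤ k := by exact_mod_cast hk
  have hn' : (k : ℝ) + 2 ≤ n := by exact_mod_cast hn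
  set x : ℝ := (n : ℝ) / 2 + ((k : ℝ) - 1) / 4 with hx
  have h1 := Nat.floor_le (show 0 ≤ x + 1 / 2 by rw [hx]; linarith)
  have h2 := Nat.lt_floor_add_one (x + 1 / 2)
  set p := ⌊x + 1 / 2⌋₊
  have hpn : p ≤ n := by
    have : (p : ℝ) ≤ n := by rw [hx] at h1; linarith
    exact_mod_cast this
  obtain ⟨q, hq⟩ := Nat.exists_eq_add_of_le hpn
  have h3 := le_extremal (k := k) hq.symm
  have h4 : 2 * (p * q) + (k - 1) * p ≤ 2 * extremal k n + 1 := by omega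
  have h5 : 2 * ((p : ℝ) * q) + ((k : ℝ) - 1) * p ≤ 2 * extremal k n + 1 := by
    have : ((2 * (p * q) + (k - 1) * p : ℕ) : ℝ) ≤ (2 * extremal k n + 1 : ℕ) := by
      exact_mod_cast h4
    push_cast [Nat.cast_sub hk] at this
    exact this
  have hq' : (n : ℝ) = p + q := by exact_mod_cast hq
  have h6 : (p : ℝ) * q + ((k : ℝ) - 1) / 2 * p = x ^ 2 - (p - x) ^ 2 := by
    rw [hx, hq']
    ring
  have h7 : ((p : ℝ) - x) ^ 2 ≤ (1 / 2) ^ 2 := by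
    apply sq_le_sq'
    · linarith
    · linarith
  nlinarith

end Extremal

/-! ### The upper bound for graphs of large minimum degree -/

section Core

open Finset

variable {V : Type*} [DecidableEq V] {G : SimpleGraph V} [DecidableRel G.Adj]

lemma sum_le_of_exceptions {α : Type*} (X : Finset α) (d : α → ℕ) (c D : ℕ)
    (hD : ∀ v ∈ X, d v ≤ D) : ∑ v ∈ X, d v ≤ c * #X + D * #{v ∈ X | c + 1 ≤ d v} := by
  rw [card_filter, mul_sum, mul_comm, ← smul_eq_mul, ← sum_const, ← sum_add_distrib]
  refine sum_le_sum fun v hv => ?_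
  have := hD v hv
  split_ifs <;> omega

/-- The case analysis on the maximum degrees `a ≥ b` inside the two parts. The first alternative is
the extremal one, with many vertices of degree `k - 1` inside `A`. In the last one the inner edges
number at most about `(k - 2) * n / 4`, which is too few by a linear amount. -/
lemma Cfg.edge_bound_aux [Fintype V] {k s : ℕ} {A B : Finset V} (h : Cfg G k s A B) (hk : 3 ≤ k)
    (hab : B.sup (degIn G B) ≤ A.sup (degIn G A)) :
    #G.edgeFinset ≤ #A * #B + (k - 1) * #A / 2 + 1 ∨
    (∃ a b, a + b ≤ k - 1 ∧ 2 * #G.edgeFinset ≤ 2 * (#A * #B) + a * #A + b * #B) ∨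
    2 * #G.edgeFinset ≤
      2 * (#A * #B) + (k - 2) * max #A #B + 2 * (k * (k * ((k + 1) * s + k * k))) := by
  set σ := k * ((k + 1) * s + k * k) with hσ
  have hσk : k * (k * k) ≤ σ := Nat.mul_le_mul_left _ (Nat.le_add_left _ _)
  have hedge := h.two_mul_card_edges
  set iA := ∑ v ∈ A, degIn G A v with hiA
  set iB := ∑ v ∈ B, degIn G B v with hiB
  set m := ∑ v ∈ A, #{u ∈ B | ¬ G.Adj v u} with hm
  set a := A.sup (degIn G A) with ha
  set b := B.sup (degIn G B) with hb
  have hAne : A.Nonempty := card_pos.1 (by have := h.bigA; omega)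
  have hBne : B.Nonempty := card_pos.1 (by have := h.bigB; omega)
  obtain ⟨v, hv, hva⟩ := exists_mem_eq_sup A hAne (degIn G A)
  obtain ⟨u, hu, hub⟩ := exists_mem_eq_sup B hBne (degIn G B)
  rw [← ha] at hva
  rw [← hb] at hub
  have hale : ∀ w ∈ A, degIn G A w ≤ a := fun w hw => le_sup (f := degIn G A) hw
  have hble : ∀ w ∈ B, degIn G B w ≤ b := fun w hw => le_sup (f := degIn G B) hw
  have hak : a ≤ k - 1 := hva ▸ h.degIn_le hv
  have hbk : b ≤ k - 1 := hub ▸ h.symm.degIn_le hu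
  have hMA : #A ≤ max #A #B := le_max_left _ _
  have hMB : #B ≤ max #A #B := le_max_right _ _
  set M := max #A #B with hM
  have iAle : ∀ c, iA ≤ c * #A + a * #{v ∈ A | c + 1 ≤ degIn G A v} := fun c =>
    sum_le_of_exceptions A (degIn G A) c a hale
  have iBle : ∀ c, iB ≤ c * #B + b * #{v ∈ B | c + 1 ≤ degIn G B v} := fun c =>
    sum_le_of_exceptions B (degIn G B) c b hble
  have iAa : iA ≤ a * #A := by
    rw [mul_comm, ← smul_eq_mul]
    exact sum_le_card_nsmul _ _ _ hale
  have iBb : iB ≤ b * #B := by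
    rw [mul_comm, ← smul_eq_mul]
    exact sum_le_card_nsmul _ _ _ hble
  have mulA : ∀ x, x ≤ σ → a * x ≤ k * σ := fun x hx => Nat.mul_le_mul (by omega) hx
  have mulB : ∀ x, x ≤ σ → b * x ≤ k * σ := fun x hx => Nat.mul_le_mul (by omega) hx
  have mA : ∀ c, c * #A ≤ c * M := fun c => Nat.mul_le_mul_left _ hMA
  have mB : ∀ c, c * #B ≤ c * M := fun c => Nat.mul_le_mul_left _ hMB
  rcases eq_or_lt_of_le hak with hak1 | hak1
  · have hB1 := iBle 0
    have hB2 := mulB _ (h.card_pos_degIn_le hk hv (by omega))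
    simp only [zero_add, zero_mul] at hB1
    by_cases hmany : k * (k * k) < #{v ∈ A | k - 1 ≤ degIn G A v}
    · left
      have h1 := h.sum_degIn_le_of_many hk hmany
      rw [hak1] at iAa
      omega
    · right; right
      have hA1 := iAle (k - 2)
      rw [show k - 2 + 1 = k - 1 by omega] at hA1
      have hA2 := mulA _ ((not_lt.1 hmany).trans hσk)
      have := mA (k - 2)
      omega
  · by_cases hsum : a + b ≤ k - 1
    · right; left
      exact ⟨a, b, hsum, by omega⟩
    · right; right
      have hB1 : iB ≤ 1 * #B + b * #{v ∈ B | 2 ≤ degIn G B v} := iBle 1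
      have hB2 := mulB _ (h.card_two_degIn_le hk hv (by omega))
      rcases Nat.lt_or_ge a (k - 2) with ha3 | ha3
      · have h1 : a * #A ≤ (k - 3) * M := Nat.mul_le_mul (by omega) hMA
        have h2 := mB 1
        have h3 : (k - 2) * M = (k - 3) * M + 1 * M := by
          rw [← Nat.add_mul]
          congr 1
          omega
        omega
      · have ha2 : a = k - 2 := by omega
        have h2 := mB 1
        have h3 : (k - 2) * M = (k - 3) * M + 1 * M := by
          rw [← Nat.add_mul]
          congr 1
          omega
        have hb2 : 2 ≤ b := by omega
        -- Now `a = k - 2` and `b ≥ 2`. For `k = 4` both sides have few vertices of inner degree two.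
        rcases Nat.lt_or_ge k 5 with hk5 | hk5
        · have hk4 : k = 4 := by omega
          have hA1 : iA ≤ 1 * #A + a * #{v ∈ A | 2 ≤ degIn G A v} := iAle 1
          have hA2 := mulA _ (h.symm.card_two_degIn_le hk hu (by omega))
          have h4 := mA 1
          have h5 : (k - 3) * M = 1 * M := by rw [hk4]
          omega
        · by_cases hmany : σ < #{v ∈ A | k - 2 ≤ degIn G A v}
          · have hB3 := iBle 0
            have hB4 := mulB _ (h.card_pos_degIn_le_of_path hk5 hmany hu (by omega))
            simp only [zero_add, zero_mul] at hB3
            have h4 := mA (k - 2)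
            rw [ha2] at iAa
            omega
          · have hA1 := iAle (k - 3)
            rw [show k - 3 + 1 = k - 2 by omega] at hA1
            have hA2 := mulA _ (not_lt.1 hmany)
            have h4 := mA (k - 3)
            omega

lemma Cfg.edge_bound [Fintype V] {k s : ℕ} {A B : Finset V} (h : Cfg G k s A B) (hk : 3 ≤ k) :
    #G.edgeFinset ≤ extremal k (Fintype.card V) + 1 ∨
    (∃ a b, a + b ≤ k - 1 ∧ 2 * #G.edgeFinset ≤ 2 * (#A * #B) + a * #A + b * #B) ∨
    2 * #G.edgeFinset ≤
      2 * (#A * #B) + (k - 2) * max #A #B + 2 * (k * (k * ((k + 1) * s + k * k))) := by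
  have hn : #A + #B = Fintype.card V := by
    rw [← card_union_of_disjoint h.disj, h.cover, card_univ]
  rcases le_total (B.sup (degIn G B)) (A.sup (degIn G A)) with hab | hab
  · rcases h.edge_bound_aux hk hab with h1 | h1 | h1
    · exact Or.inl (h1.trans (Nat.add_le_add_right (le_extremal hn) 1))
    · exact Or.inr (Or.inl h1)
    · exact Or.inr (Or.inr h1)
  · rcases h.symm.edge_bound_aux hk hab with h1 | ⟨a, b, h1, h2⟩ | h1
    · exact Or.inl (h1.trans (Nat.add_le_add_right (le_extremal (by omega)) 1))
    · refine Or.inr (Or.inl ⟨b, a, by omega, ?_⟩)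
      rw [mul_comm #B #A] at h2
      omega
    · rw [mul_comm #B #A, max_comm] at h1
      exact Or.inr (Or.inr h1)

end Core

set_option maxHeartbeats 1000000 in
open Finset in
/-- The upper bound under a minimum degree condition. -/
lemma card_edges_le_of_minDegree (k : ℕ) (hk : 3 ≤ k) :
    ∃ ε > (0 : ℝ), ∃ n₀ : ℕ, ∀ (V : Type) [Fintype V] [DecidableEq V] (G : SimpleGraph V)
      [DecidableRel G.Adj], n₀ ≤ Fintype.card V → WheelFree G k →
      (∀ v, (1 / 2 - ε) * (Fintype.card V : ℝ) ≤ degIn G univ v) →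
      #G.edgeFinset ≤ extremal k (Fintype.card V) + 1 := by
  have hkR : (3 : ℝ) ≤ k := by exact_mod_cast hk
  set τ : ℝ := 1 / (100 * (k : ℝ) ^ 3) with hτdef
  have hk3 : (27 : ℝ) ≤ (k : ℝ) ^ 3 := by
    have := pow_le_pow_left₀ (by norm_num : (0 : ℝ) ≤ 3) hkR 3
    linarith
  have hτ : 0 < τ := by positivity
  have hτk : τ * (k : ℝ) ^ 3 = 1 / 100 := by
    rw [hτdef]
    field_simp
  have hτ1 : τ ≤ 1 / 100 := by nlinarith
  obtain ⟨ε, hε, n₁, hn₁⟩ := exists_partition k hτ hτ1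
  refine ⟨min ε τ, lt_min hε hτ, n₁ + 40 * k ^ 4, ?_⟩
  intro V _ _ G _ hcard hG hdeg
  set N := Fintype.card V with hN
  set n : ℝ := (N : ℝ) with hn
  have hn0 : (0 : ℝ) ≤ n := Nat.cast_nonneg _
  have hnbig : 40 * (k : ℝ) ^ 4 ≤ n := by
    have : 40 * k ^ 4 ≤ N := by omega
    rw [hn]
    exact_mod_cast this
  obtain ⟨A, B, hdisj, hcover, hA, hB, hAc, hBc⟩ := hn₁ V G (by omega) hG (fun v =>
    le_trans (by
      have := min_le_left ε τ
      gcongr) (hdeg v))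
  have hNAB : #A + #B = N := by
    rw [← card_union_of_disjoint hdisj, hcover, card_univ]
  have hnAB : (#A : ℝ) + #B = n := by
    rw [hn, ← hNAB]
    push_cast
    ring
  have hdeg' : ∀ v, (1 / 2 - τ) * n ≤ degIn G A v + degIn G B v := by
    intro v
    have h1 := degIn_union (G := G) hdisj v
    rw [hcover] at h1
    have h2 : (degIn G univ v : ℝ) = degIn G A v + degIn G B v := by exact_mod_cast h1
    rw [← h2]
    refine le_trans ?_ (hdeg v)
    have := min_le_right ε τ
    gcongr
  set s := ⌊3 * τ * n⌋₊ with hs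
  have hsle : (s : ℝ) ≤ 3 * τ * n := Nat.floor_le (by positivity)
  have hsplit : ∀ (X : Finset V) (v : V), #{u ∈ X | ¬ G.Adj v u} + degIn G X v = #X := by
    intro X v
    rw [add_comm]
    exact card_filter_add_card_filter_not _
  -- powers of `k` against `n`
  have hkτ : ((k : ℝ) + 1) * τ ≤ 1 / 100 := by
    have h1 : (k : ℝ) + 1 ≤ (k : ℝ) ^ 3 := by nlinarith [sq_nonneg ((k : ℝ) - 1)]
    calc ((k : ℝ) + 1) * τ ≤ (k : ℝ) ^ 3 * τ := by gcongr
      _ = 1 / 100 := by rw [mul_comm, hτk]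
  have hk4 : 27 * (k : ℝ) ≤ (k : ℝ) ^ 4 := by
    have : (k : ℝ) ^ 4 = (k : ℝ) ^ 3 * k := by ring
    rw [this]
    gcongr
  have hbig : ∀ x : ℕ, (1 / 2 - τ) * n ≤ x → (k + 1) * s + 2 * k ≤ x := by
    intro x hx
    have h1 : ((k : ℝ) + 1) * s ≤ 3 / 100 * n := by
      calc ((k : ℝ) + 1) * s ≤ ((k : ℝ) + 1) * (3 * τ * n) := by gcongr
        _ = 3 * (((k : ℝ) + 1) * τ) * n := by ring
        _ ≤ 3 * (1 / 100) * n := by gcongr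
        _ = 3 / 100 * n := by ring
    have h2 : (((k + 1) * s + 2 * k : ℕ) : ℝ) ≤ x := by
      push_cast
      nlinarith
    exact_mod_cast h2
  have hcfg : Cfg G k s A B := by
    refine ⟨hG, hdisj, hcover, ?_, ?_, hbig _ (by linarith), hbig _ (by linarith)⟩
    · intro v hv
      refine Nat.le_floor ?_
      have h1 : (#{u ∈ B | ¬ G.Adj v u} + degIn G B v : ℝ) = #B := by exact_mod_cast hsplit B v
      have := hA v hv
      have := hdeg' v
      linarith
    · intro v hv
      refine Nat.le_floor ?_
      have h1 : (#{u ∈ A | ¬ G.Adj v u} + degIn G A v : ℝ) = #A := by exact_mod_cast hsplit A v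
      have := hB v hv
      have := hdeg' v
      linarith
  have hext : ((n : ℝ) / 2 + ((k : ℝ) - 1) / 4) ^ 2 - 3 / 4 ≤ extremal k N :=
    extremal_ge (by omega) (by
      have : ((k + 2 : ℕ) : ℝ) ≤ N := by
        push_cast
        linarith
      exact_mod_cast this)
  rcases hcfg.edge_bound hk with h1 | ⟨a, b, hab, h1⟩ | h1
  · exact h1
  · -- `p q + (a p + b q) / 2` is at most the unrounded maximum
    refine Nat.le_succ_of_le (Nat.lt_succ_iff.1 ?_)
    have h2 : 2 * (#G.edgeFinset : ℝ) ≤ 2 * (#A * #B) + a * #A + b * #B := by exact_mod_cast h1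
    have habR : (a : ℝ) + b ≤ (k : ℝ) - 1 := by
      have : ((a + b : ℕ) : ℝ) ≤ (k - 1 : ℕ) := by exact_mod_cast hab
      rw [Nat.cast_sub (by omega)] at this
      push_cast at this
      exact this
    have ha0 : (0 : ℝ) ≤ a := Nat.cast_nonneg _
    have hb0 : (0 : ℝ) ≤ b := Nat.cast_nonneg _
    have h3 : ((a : ℝ) - b) ^ 2 ≤ ((k : ℝ) - 1) ^ 2 := sq_le_sq' (by linarith) (by linarith)
    have h4 : 2 * ((#A : ℝ) * #B) + a * #A + b * #B = n ^ 2 / 2 + (a + b) * n / 2 +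
        ((a : ℝ) - b) ^ 2 / 8 - ((#A : ℝ) - #B - (a - b) / 2) ^ 2 / 2 := by
      rw [← hnAB]
      ring
    have h5 : ((a : ℝ) + b) * n ≤ ((k : ℝ) - 1) * n := by gcongr
    have h6 : (#G.edgeFinset : ℝ) < extremal k N + 1 := by
      nlinarith [sq_nonneg ((#A : ℝ) - #B - (a - b) / 2)]
    exact_mod_cast h6
  · refine Nat.le_succ_of_le (Nat.lt_succ_iff.1 ?_)
    have hM : ((max #A #B : ℕ) : ℝ) ≤ (1 / 2 + τ) * n := by
      rcases max_choice #A #B with h2 | h2 <;> rw [h2]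
      · exact hAc
      · exact hBc
    have h2 : 2 * (#G.edgeFinset : ℝ) ≤ 2 * (#A * #B) + ((k : ℝ) - 2) * (max #A #B : ℕ) +
        2 * (k * (k * ((k + 1) * s + k * k))) := by
      have : ((2 * #G.edgeFinset : ℕ) : ℝ) ≤ (2 * (#A * #B) + (k - 2) * max #A #B +
        2 * (k * (k * ((k + 1) * s + k * k))) : ℕ) := by exact_mod_cast h1
      rw [Nat.cast_add, Nat.cast_add, Nat.cast_mul (k - 2), Nat.cast_sub (by omega)] at this
      push_cast at this ⊢
      exact this
    have h3 : ((k : ℝ) - 2) * (max #A #B : ℕ) ≤ ((k : ℝ) - 2) * ((1 / 2 + τ) * n) := by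
      have : (0 : ℝ) ≤ (k : ℝ) - 2 := by linarith
      gcongr
    have h4 : ((k : ℝ) - 2) * τ ≤ 1 / 100 := by linarith
    have h5 : (k : ℝ) * (k * ((k + 1) * s)) ≤ 6 / 100 * n := by
      calc (k : ℝ) * (k * ((k + 1) * s)) ≤ (k : ℝ) * (k * ((k + 1) * (3 * τ * n))) := by gcongr
        _ = 3 * ((k : ℝ) * (k * (k + 1)) * τ) * n := by ring
        _ ≤ 3 * (2 * (k : ℝ) ^ 3 * τ) * n := by
            have : (k : ℝ) * (k * (k + 1)) ≤ 2 * (k : ℝ) ^ 3 := by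
              nlinarith [sq_nonneg (k : ℝ)]
            have := mul_le_mul_of_nonneg_right this hτ.le
            exact mul_le_mul_of_nonneg_right (by linarith) hn0
        _ = 6 * (τ * (k : ℝ) ^ 3) * n := by ring
        _ = 6 / 100 * n := by rw [hτk]; ring
    have h6 : 2 * ((#A : ℝ) * #B) ≤ n ^ 2 / 2 := by
      rw [← hnAB]
      nlinarith [sq_nonneg ((#A : ℝ) - #B)]
    have h7 : ((k : ℝ) - 2) * ((1 / 2 + τ) * n) ≤ ((k : ℝ) - 2) * n / 2 + 1 / 100 * n := by
      have : ((k : ℝ) - 2) * τ * n ≤ 1 / 100 * n := by gcongr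
      linarith
    have h8 : 2 * ((k : ℝ) * (k * ((k + 1) * s + k * k))) =
        2 * ((k : ℝ) * (k * ((k + 1) * s))) + 2 * (k : ℝ) ^ 4 := by ring
    have h10 : (n / 2 + ((k : ℝ) - 1) / 4) ^ 2 =
        n ^ 2 / 4 + ((k : ℝ) - 2) * n / 4 + n / 4 + ((k : ℝ) - 1) ^ 2 / 16 := by ring
    have h11 := sq_nonneg ((k : ℝ) - 1)
    have h9 : (#G.edgeFinset : ℝ) < extremal k N + 1 := by
      rw [h8] at h2
      rw [h10] at hext
      linarith
    exact_mod_cast h9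

/-! ### The upper bound -/

lemma IsEvenCycle.map {V W : Type*} {G : SimpleGraph V} {H : SimpleGraph W} {k : ℕ} {c : List V}
    (hc : IsEvenCycle G k c) (f : G →g H) (hf : Function.Injective f) :
    IsEvenCycle H k (c.map f) := by
  obtain ⟨h1, h2, h3, h4⟩ := hc
  refine ⟨by simpa using h1, h2.map hf, ?_, ?_⟩
  · rw [List.isChain_map]
    exact h3.imp fun a b hab => f.map_adj hab
  · intro x hx y hy
    rw [List.getLast?_map, Option.mem_map] at hx
    rw [List.head?_map, Option.mem_map] at hy
    obtain ⟨a, ha, rfl⟩ := hx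
    obtain ⟨b, hb, rfl⟩ := hy
    exact f.map_adj (h4 a ha b hb)

lemma WheelFree.of_hom {V W : Type*} {G : SimpleGraph V} {H : SimpleGraph W} {k : ℕ}
    (hH : WheelFree H k) (f : G →g H) (hf : Function.Injective f) : WheelFree G k := by
  intro v c hc hv
  refine hH (f v) (c.map f) (hc.map f hf) ?_
  intro x hx
  obtain ⟨a, ha, rfl⟩ := List.mem_map.1 hx
  exact f.map_adj (hv a ha)

section Upper

open Finset

lemma degIn_univ {V : Type*} [Fintype V] {G : SimpleGraph V} [DecidableRel G.Adj] (v : V) :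
    degIn G univ v = G.degree v := by
  rw [← card_neighborFinset_eq_degree, neighborFinset_eq_filter, degIn]

/-- Vertices of small degree are deleted one at a time. Each deletion gains at least one edge
against the extremal function, so the initial surplus `n₁ ^ 2` is used up eventually. -/
lemma card_edges_le_add (k : ℕ) (hk : 3 ≤ k) :
    ∃ n₁ : ℕ, ∀ (j : ℕ) (V : Type) [Fintype V] [DecidableEq V] (G : SimpleGraph V)
      [DecidableRel G.Adj], Fintype.card V = n₁ + j → WheelFree G k →
      #G.edgeFinset ≤ extremal k (n₁ + j) + 1 + (n₁ ^ 2 - j) := by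
  obtain ⟨ε, hε, n₀, hn₀⟩ := card_edges_le_of_minDegree k hk
  obtain ⟨n₂, hn₂⟩ := exists_nat_gt (3 / (2 * ε))
  refine ⟨n₀ + n₂, ?_⟩
  set n₁ := n₀ + n₂ with hn₁
  intro j
  induction j with
  | zero =>
    intro V _ _ G _ hV hG
    have h1 := G.card_edgeFinset_le_card_choose_two
    have h2 : (Fintype.card V).choose 2 ≤ (Fintype.card V) ^ 2 := Nat.choose_le_pow _ _
    rw [hV] at h1 h2
    simp only [Nat.add_zero, Nat.sub_zero] at *
    omega
  | succ j ih =>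
    intro V _ _ G _ hV hG
    by_cases hdeg : ∀ v, (1 / 2 - ε) * (Fintype.card V : ℝ) ≤ degIn G univ v
    · have := hn₀ V G (by omega) hG hdeg
      rw [hV] at this
      omega
    · push Not at hdeg
      obtain ⟨v, hv⟩ := hdeg
      rw [degIn_univ] at hv
      have hd : 2 * G.degree v + 3 ≤ n₁ + j + 1 := by
        have h1 : (n₂ : ℝ) ≤ Fintype.card V := by
          exact_mod_cast (by omega : n₂ ≤ Fintype.card V)
        have h2 : 3 / (2 * ε) < Fintype.card V := lt_of_lt_of_le hn₂ h1
        rw [div_lt_iff₀ (by positivity)] at h2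
        have h3 : (2 * G.degree v + 3 : ℝ) < Fintype.card V := by nlinarith
        have h4 : 2 * G.degree v + 3 < Fintype.card V := by exact_mod_cast h3
        omega
      have hcard : Fintype.card ({v}ᶜ : Set V) = n₁ + j := by
        rw [Fintype.card_compl_set, hV]
        simp
      have h1 := ih ({v}ᶜ : Set V) (G.induce ({v}ᶜ : Set V)) hcard
        (hG.of_hom (Embedding.induce _).toHom Subtype.val_injective)
      have h2 : #(G.induce ({v}ᶜ : Set V)).edgeFinset = #G.edgeFinset - G.degree v := by
        rw [card_edgeFinset_induce_compl_singleton, card_edgeFinset_deleteIncidenceSet]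
      have h3 := extremal_succ k (n₁ + j)
      rw [h2] at h1
      rw [← add_assoc]
      omega

lemma exists_card_edges_le (k : ℕ) (hk : 3 ≤ k) :
    ∃ n₀ : ℕ, ∀ (V : Type) [Fintype V] [DecidableEq V] (G : SimpleGraph V)
      [DecidableRel G.Adj], n₀ ≤ Fintype.card V → WheelFree G k →
      #G.edgeFinset ≤ extremal k (Fintype.card V) + 1 := by
  obtain ⟨n₁, h⟩ := card_edges_le_add k hk
  refine ⟨n₁ + n₁ ^ 2, ?_⟩
  intro V _ _ G _ hV hG
  obtain ⟨j, hj⟩ := Nat.exists_eq_add_of_le hV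
  have := h (n₁ ^ 2 + j) V G (by omega) hG
  rw [← add_assoc, ← hj] at this
  omega

end Upper

/-! ### Joins without an odd wheel -/

section Join

open Finset

lemma graphJoin_adj_inl_inl {α β : Type*} {D : SimpleGraph α} {E : SimpleGraph β} {a b : α} :
    (graphJoin D E).Adj (Sum.inl a) (Sum.inl b) ↔ D.Adj a b := by
  simp only [graphJoin, SimpleGraph.fromRel_adj, ne_eq, Sum.inl.injEq]
  exact ⟨fun h => h.2.elim id fun h => h.symm, fun h => ⟨h.ne, Or.inl h⟩⟩

lemma graphJoin_adj_inr_inr {α β : Type*} {D : SimpleGraph α} {E : SimpleGraph β} {a b : β} :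
    (graphJoin D E).Adj (Sum.inr a) (Sum.inr b) ↔ E.Adj a b := by
  simp only [graphJoin, SimpleGraph.fromRel_adj, ne_eq, Sum.inr.injEq]
  exact ⟨fun h => h.2.elim id fun h => h.symm, fun h => ⟨h.ne, Or.inl h⟩⟩

lemma graphJoin_adj_inl_inr {α β : Type*} {D : SimpleGraph α} {E : SimpleGraph β} (a : α) (b : β) :
    (graphJoin D E).Adj (Sum.inl a) (Sum.inr b) := by
  simp [graphJoin]

/-- A copy of the wheel, with the rim indexed periodically by the natural numbers. -/
lemma Contains.exists_rim {V : Type*} {G : SimpleGraph V} {k : ℕ} (hk : 1 ≤ k)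
    (h : Contains G (wheelGraph (2 * k + 1))) :
    ∃ (v : V) (c : ℕ → V), (∀ t, G.Adj v (c t)) ∧ (∀ t, G.Adj (c t) (c (t + 1))) ∧
      ∀ s t, c s = c t → s % (2 * k) = t % (2 * k) := by
  obtain ⟨f, hf⟩ := h
  let r : ℕ → Fin (2 * k + 1 - 1) := fun t => ⟨t % (2 * k), Nat.mod_lt _ (by omega)⟩
  refine ⟨f (Sum.inl ()), fun t => f (Sum.inr (r t)), ?_, ?_, ?_⟩
  · exact fun t => f.map_adj (wheelGraph_adj_inl_inr _ _ _)
  · intro t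
    apply f.map_adj
    rw [wheelGraph_adj_inr_inr, cycleGraph_adj']
    right
    have h1 : r (t + 1) = ⟨(t % (2 * k) + 1) % (2 * k), Nat.mod_lt _ (by omega)⟩ := by
      simp [r]
    rw [h1, Fin.sub_def]
    have h2 : t % (2 * k) < 2 * k := Nat.mod_lt _ (by omega)
    simp only [r, Nat.add_sub_cancel]
    rw [Nat.add_mod_mod, show 2 * k - t % (2 * k) + (t % (2 * k) + 1) = 1 + 2 * k by omega,
      Nat.add_mod_right, Nat.mod_eq_of_lt (by omega)]
  · intro s t hst
    have := hf hst
    simpa [r] using this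

/-- Suppose that `D` has maximum degree less than `k` and that its vertices are labelled so that
adjacent vertices share a label and no label occurs more than `2 * k - 2` times, and suppose that
`E` has at most one edge. A hub in `D` leaves at least `k + 1` rim vertices in `E`, hence two rim
edges in `E`. A hub in `E` leaves at most one rim vertex in `E`, so that a rim path on `2 * k - 1`
vertices lies within one label class of `D`. -/
lemma not_contains_graphJoin {α β ι : Type*} [Finite α] {D : SimpleGraph α} {E : SimpleGraph β}
    {k : ℕ} (hk : 3 ≤ k) (ℓ : α → ι) (hD : ∀ a, (D.neighborSet a).ncard ≤ k - 1)
    (hl : ∀ a b, D.Adj a b → ℓ a = ℓ b) (hfib : ∀ i, (ℓ ⁻¹' {i}).ncard ≤ 2 * k - 2)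
    (hE : ∀ a b a' b', E.Adj a b → E.Adj a' b' → a = a' ∨ (a = b' ∧ b = a')) :
    ¬ Contains (graphJoin D E) (wheelGraph (2 * k + 1)) := by
  intro h
  obtain ⟨v, c, hv, hc, hinj⟩ := h.exists_rim (by omega)
  rcases v with a | b
  · classical
    have key : ∀ j, #{t ∈ range (2 * k) | (c (t + j)).isLeft} ≤ k - 1 := by
      intro j
      refine le_trans ?_ (hD a)
      rw [← Set.ncard_image_of_injective (D.neighborSet a) (Sum.inl_injective (β := β)),
        ← Set.ncard_coe_finset]
      refine Set.ncard_le_ncard_of_injOn (fun t => c (t + j)) ?_ ?_ (Set.toFinite _)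
      · intro t ht
        simp only [coe_filter, mem_range, Set.mem_ofPred_eq] at ht
        obtain ⟨x, hx⟩ := Sum.isLeft_iff.1 ht.2
        refine ⟨x, ?_, hx.symm⟩
        have := hv (t + j)
        rw [hx, graphJoin_adj_inl_inl] at this
        exact this
      · intro s hs t ht hst
        simp only [coe_filter, mem_range, Set.mem_ofPred_eq] at hs ht
        have h1 : s + j ≡ t + j [MOD 2 * k] := hinj _ _ hst
        have h2 := Nat.ModEq.add_right_cancel' _ h1
        rwa [Nat.ModEq, Nat.mod_eq_of_lt hs.1, Nat.mod_eq_of_lt ht.1] at h2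
    set T := {t ∈ range (2 * k) | ¬ (c (t + 0)).isLeft ∧ ¬ (c (t + 1)).isLeft} with hT
    have hT2 : 1 < #T := by
      have h1 : range (2 * k) ⊆ ({t ∈ range (2 * k) | (c (t + 0)).isLeft} : Finset ℕ) ∪
          ({t ∈ range (2 * k) | (c (t + 1)).isLeft} : Finset ℕ) ∪ T := by
        intro t ht
        simp only [hT, mem_union, mem_filter]
        tauto
      have h2 := card_le_card h1
      have h3 := card_union_le (({t ∈ range (2 * k) | (c (t + 0)).isLeft} : Finset ℕ) ∪
          ({t ∈ range (2 * k) | (c (t + 1)).isLeft} : Finset ℕ)) T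
      have h4 := card_union_le ({t ∈ range (2 * k) | (c (t + 0)).isLeft} : Finset ℕ)
          ({t ∈ range (2 * k) | (c (t + 1)).isLeft} : Finset ℕ)
      have h5 := key 0
      have h6 := key 1
      rw [card_range] at h2
      omega
    obtain ⟨s, hs, t, ht, hst⟩ := one_lt_card.1 hT2
    simp only [hT, mem_filter, mem_range, Sum.not_isLeft, Sum.isRight_iff, add_zero] at hs ht
    obtain ⟨hs1, ⟨x, hx⟩, ⟨y, hy⟩⟩ := hs
    obtain ⟨ht1, ⟨x', hx'⟩, ⟨y', hy'⟩⟩ := ht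
    have e1 := hc s
    have e2 := hc t
    rw [hx, hy, graphJoin_adj_inr_inr] at e1
    rw [hx', hy', graphJoin_adj_inr_inr] at e2
    rcases hE _ _ _ _ e1 e2 with e | ⟨e, e'⟩
    · have := hinj s t (by rw [hx, hx', e])
      rw [Nat.mod_eq_of_lt hs1, Nat.mod_eq_of_lt ht1] at this
      exact hst this
    · have h1 : s ≡ t + 1 [MOD 2 * k] := hinj s (t + 1) (by rw [hx, hy', e])
      have h2 : s + 1 ≡ t [MOD 2 * k] := hinj (s + 1) t (by rw [hy, hx', e'])
      have h3 : t + 2 ≡ t + 0 [MOD 2 * k] := (h1.symm.add_right 1).trans h2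
      have h4 := Nat.ModEq.add_left_cancel' _ h3
      rw [Nat.ModEq, Nat.mod_eq_of_lt (by omega), Nat.zero_mod] at h4
      omega
  · have hB : ∀ s t x y, c s = Sum.inr x → c t = Sum.inr y → x = y := by
      intro s t x y hx hy
      have e1 := (hv s).symm
      have e2 := (hv t).symm
      rw [hx, graphJoin_adj_inr_inr] at e1
      rw [hy, graphJoin_adj_inr_inr] at e2
      rcases hE _ _ _ _ e1 e2 with e | ⟨e, -⟩
      · exact e
      · exact absurd e e1.ne
    obtain ⟨s, hs⟩ : ∃ s, ∀ i < 2 * k - 1, ∃ a, c (s + 1 + i) = Sum.inl a := by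
      by_cases hex : ∃ s x, c s = Sum.inr x
      · obtain ⟨s, x, hx⟩ := hex
        refine ⟨s, fun i hi => ?_⟩
        rcases hy : c (s + 1 + i) with a | y
        · exact ⟨a, rfl⟩
        · exfalso
          have h1 : s + 0 ≡ s + (1 + i) [MOD 2 * k] := by
            rw [← add_assoc]
            exact hinj _ _ (by rw [add_zero, hx, hy, hB _ _ _ _ hx hy])
          have h2 := Nat.ModEq.add_left_cancel' _ h1
          rw [Nat.ModEq, Nat.mod_eq_of_lt (by omega), Nat.mod_eq_of_lt (by omega)] at h2
          omega
      · push Not at hex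
        refine ⟨0, fun i _ => ?_⟩
        rcases hy : c (0 + 1 + i) with a | y
        · exact ⟨a, rfl⟩
        · exact absurd hy (hex _ _)
    have hpos : 0 < 2 * k - 1 := by omega
    obtain ⟨a₀, ha₀⟩ := hs 0 hpos
    have hlab : ∀ i < 2 * k - 1, ∃ a, c (s + 1 + i) = Sum.inl a ∧ ℓ a = ℓ a₀ := by
      intro i
      induction i with
      | zero => exact fun _ => ⟨a₀, ha₀, rfl⟩
      | succ i ih =>
        intro hi
        obtain ⟨a, ha, hla⟩ := ih (by omega)
        obtain ⟨b, hb⟩ := hs (i + 1) hi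
        refine ⟨b, hb, ?_⟩
        have := hc (s + 1 + i)
        rw [ha, add_assoc, hb, graphJoin_adj_inl_inl] at this
        rw [← hl _ _ this, hla]
    have h1 := hfib (ℓ a₀)
    rw [← Set.ncard_image_of_injective _ (Sum.inl_injective (β := β))] at h1
    have h2 : (↑(range (2 * k - 1)) : Set ℕ).ncard ≤
        ((Sum.inl : α → α ⊕ β) '' (ℓ ⁻¹' {ℓ a₀})).ncard := by
      refine Set.ncard_le_ncard_of_injOn (fun i => c (s + 1 + i)) ?_ ?_ (Set.toFinite _)
      · intro i hi
        obtain ⟨a, ha, hla⟩ := hlab i (by simpa using hi)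
        exact ⟨a, hla, ha.symm⟩
      · intro i hi j hj hij
        simp only [coe_range, Set.mem_Iio] at hi hj
        have h3 : s + 1 + i ≡ s + 1 + j [MOD 2 * k] := hinj _ _ hij
        have h4 := Nat.ModEq.add_left_cancel' _ h3
        rwa [Nat.ModEq, Nat.mod_eq_of_lt (by omega), Nat.mod_eq_of_lt (by omega)] at h4
    rw [Set.ncard_coe_finset, card_range] at h2
    omega

lemma two_mul_card_edgeSet {V : Type*} [Fintype V] (G : SimpleGraph V) :
    2 * Nat.card G.edgeSet = ∑ v, (G.neighborSet v).ncard := by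
  classical
  have h1 : ∀ v, (G.neighborSet v).ncard = G.degree v := fun v => by
    rw [Set.ncard_eq_toFinset_card', ← card_neighborFinset_eq_degree, neighborFinset]
  simp_rw [h1]
  rw [G.sum_degrees_eq_twice_card_edges, Nat.card_eq_fintype_card, edgeFinset_card]

lemma two_mul_card_edgeSet_graphJoin {α β : Type*} [Fintype α] [Fintype β] (D : SimpleGraph α)
    (E : SimpleGraph β) :
    2 * Nat.card (graphJoin D E).edgeSet =
      2 * (Fintype.card α * Fintype.card β) + ∑ a, (D.neighborSet a).ncard +
        ∑ b, (E.neighborSet b).ncard := by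
  have h1 : ∀ a, ((graphJoin D E).neighborSet (Sum.inl a)).ncard =
      (D.neighborSet a).ncard + Fintype.card β := by
    intro a
    have : (graphJoin D E).neighborSet (Sum.inl a) = Sum.inl '' D.neighborSet a ∪
        Set.range Sum.inr := by
      ext (x | y)
      · simp [graphJoin_adj_inl_inl]
      · simp [graphJoin_adj_inl_inr]
    rw [this, Set.ncard_union_eq ?_ (Set.toFinite _) (Set.toFinite _),
      Set.ncard_image_of_injective _ Sum.inl_injective, ← Set.image_univ,
      Set.ncard_image_of_injective _ Sum.inr_injective, Set.ncard_univ, Nat.card_eq_fintype_card]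
    rw [Set.disjoint_left]
    rintro _ ⟨x, -, rfl⟩ ⟨y, hy⟩
    cases hy
  have h2 : ∀ b, ((graphJoin D E).neighborSet (Sum.inr b)).ncard =
      Fintype.card α + (E.neighborSet b).ncard := by
    intro b
    have : (graphJoin D E).neighborSet (Sum.inr b) = Set.range Sum.inl ∪
        Sum.inr '' E.neighborSet b := by
      ext (x | y)
      · simp [(graphJoin_adj_inl_inr x b).symm]
      · simp [graphJoin_adj_inr_inr]
    rw [this, Set.ncard_union_eq ?_ (Set.toFinite _) (Set.toFinite _),
      Set.ncard_image_of_injective _ Sum.inr_injective, ← Set.image_univ,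
      Set.ncard_image_of_injective _ Sum.inl_injective, Set.ncard_univ, Nat.card_eq_fintype_card]
    rw [Set.disjoint_left]
    rintro _ ⟨x, rfl⟩ ⟨y, -, hy⟩
    cases hy
  rw [two_mul_card_edgeSet, Fintype.sum_sum_type]
  simp_rw [h1, h2]
  rw [sum_add_distrib, sum_add_distrib]
  simp only [sum_const, card_univ, smul_eq_mul]
  ring

end Join

/-! ### Nearly regular graphs with small components -/

section Blocks

open Finset

/-- There is a graph on `p` vertices of maximum degree at most `k - 1` whose degree sum falls short
of `(k - 1) * p` by at most `δ` and whose components have at most `2 * k - 2` vertices. The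
components are encoded by a labelling of the vertices that is constant along edges. -/
def Nice (k δ p : ℕ) : Prop :=
  ∃ (W ι : Type) (_ : Fintype W) (D : SimpleGraph W) (ℓ : W → ι), Fintype.card W = p ∧
    (∀ a, (D.neighborSet a).ncard ≤ k - 1) ∧ (∀ a b, D.Adj a b → ℓ a = ℓ b) ∧
    (∀ i, (ℓ ⁻¹' {i}).ncard ≤ 2 * k - 2) ∧ (k - 1) * p ≤ ∑ a, (D.neighborSet a).ncard + δ

lemma ncard_neighborSet {V : Type*} (G : SimpleGraph V) (v : V) [Fintype (G.neighborSet v)] :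
    (G.neighborSet v).ncard = G.degree v := by
  rw [Set.ncard_eq_toFinset_card', ← card_neighborFinset_eq_degree, neighborFinset]

lemma ncard_neighborSet_sum_inl {V W : Type*} (G : SimpleGraph V) (H : SimpleGraph W) (v : V) :
    ((G ⊕g H).neighborSet (Sum.inl v)).ncard = (G.neighborSet v).ncard := by
  rw [neighborSet_sum_inl, Set.ncard_image_of_injective _ Sum.inl_injective]

lemma ncard_neighborSet_sum_inr {V W : Type*} (G : SimpleGraph V) (H : SimpleGraph W) (w : W) :
    ((G ⊕g H).neighborSet (Sum.inr w)).ncard = (H.neighborSet w).ncard := by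
  rw [neighborSet_sum_inr, Set.ncard_image_of_injective _ Sum.inr_injective]

lemma Nice.zero (k : ℕ) : Nice k 0 0 :=
  ⟨Empty, Unit, inferInstance, ⊥, fun _ => (), rfl, fun a => a.elim, fun a => a.elim,
    fun i => by simp [Set.eq_empty_of_isEmpty], by simp⟩

lemma Nice.add {k δ δ' p p' : ℕ} (h : Nice k δ p) (h' : Nice k δ' p') :
    Nice k (δ + δ') (p + p') := by
  obtain ⟨W, ι, _, D, ℓ, hc, hd, hl, hf, hs⟩ := h
  obtain ⟨W', ι', _, D', ℓ', hc', hd', hl', hf', hs'⟩ := h'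
  refine ⟨W ⊕ W', ι ⊕ ι', inferInstance, D ⊕g D', Sum.map ℓ ℓ', ?_, ?_, ?_, ?_, ?_⟩
  · rw [Fintype.card_sum, hc, hc']
  · rintro (a | a)
    · rw [ncard_neighborSet_sum_inl]
      exact hd a
    · rw [ncard_neighborSet_sum_inr]
      exact hd' a
  · rintro (a | a) (b | b) hab
    · exact congrArg Sum.inl (hl a b hab)
    · exact absurd hab (not_adj_sum_inl_inr _ _)
    · exact absurd hab.symm (not_adj_sum_inl_inr _ _)
    · exact congrArg Sum.inr (hl' a b hab)
  · rintro (i | i)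
    · have : Sum.map ℓ ℓ' ⁻¹' {Sum.inl i} = Sum.inl '' (ℓ ⁻¹' {i}) := by
        ext (x | x) <;> simp
      rw [this, Set.ncard_image_of_injective _ Sum.inl_injective]
      exact hf i
    · have : Sum.map ℓ ℓ' ⁻¹' {Sum.inr i} = Sum.inr '' (ℓ' ⁻¹' {i}) := by
        ext (x | x) <;> simp
      rw [this, Set.ncard_image_of_injective _ Sum.inr_injective]
      exact hf' i
  · rw [Fintype.sum_sum_type]
    simp_rw [ncard_neighborSet_sum_inl, ncard_neighborSet_sum_inr]
    rw [mul_add]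
    omega

lemma Nice.mul {k p : ℕ} (h : Nice k 0 p) (m : ℕ) : Nice k 0 (m * p) := by
  induction m with
  | zero => simpa using Nice.zero k
  | succ m ih => simpa [Nat.succ_mul] using ih.add h

lemma nice_of_card_le {k δ : ℕ} {W : Type} [Fintype W] (D : SimpleGraph W)
    (hW : Fintype.card W ≤ 2 * k - 2) (hd : ∀ a, (D.neighborSet a).ncard ≤ k - 1)
    (hs : (k - 1) * Fintype.card W ≤ ∑ a, (D.neighborSet a).ncard + δ) :
    Nice k δ (Fintype.card W) :=
  ⟨W, Unit, inferInstance, D, fun _ => (), rfl, hd, fun _ _ _ => rfl,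
    fun i => (Set.ncard_le_card _).trans (by rwa [Nat.card_eq_fintype_card]), hs⟩

lemma nice_complete {k : ℕ} (hk : 3 ≤ k) : Nice k 0 k := by
  have h1 : ∀ a, ((⊤ : SimpleGraph (Fin k)).neighborSet a).ncard = k - 1 := fun a => by
    rw [ncard_neighborSet, complete_graph_degree, Fintype.card_fin]
  have := nice_of_card_le (k := k) (δ := 0) (⊤ : SimpleGraph (Fin k))
    (by rw [Fintype.card_fin]; omega) (fun a => (h1 a).le) (by
      rw [sum_congr rfl fun a _ => h1 a]
      simp [mul_comm])
  rwa [Fintype.card_fin] at this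

lemma nice_bipartite {k : ℕ} (hk : 3 ≤ k) : Nice k 0 (2 * k - 2) := by
  set D := completeBipartiteGraph (Fin (k - 1)) (Fin (k - 1)) with hD
  have h1 : ∀ a, (D.neighborSet a).ncard = k - 1 := by
    rintro (a | a)
    · have : D.neighborSet (Sum.inl a) = Set.range Sum.inr := by
        ext (x | x) <;> simp [hD]
      rw [this, ← Set.image_univ, Set.ncard_image_of_injective _ Sum.inr_injective, Set.ncard_univ]
      simp
    · have : D.neighborSet (Sum.inr a) = Set.range Sum.inl := by
        ext (x | x) <;> simp [hD]
      rw [this, ← Set.image_univ, Set.ncard_image_of_injective _ Sum.inl_injective, Set.ncard_univ]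
      simp
  have hc : Fintype.card (Fin (k - 1) ⊕ Fin (k - 1)) = 2 * k - 2 := by
    rw [Fintype.card_sum, Fintype.card_fin]
    omega
  have := nice_of_card_le (k := k) (δ := 0) D hc.le (fun a => (h1 a).le) (by simp [h1, mul_comm])
  rwa [hc] at this

instance : DecidableRel (completeBipartiteGraph (Fin 1) (Fin 2)).Adj := fun a b =>
  inferInstanceAs (Decidable (a.isLeft ∧ b.isRight ∨ a.isRight ∧ b.isLeft))

/-- A path on three vertices together with `j` disjoint edges. -/
lemma exists_edge_cover (j : ℕ) : ∃ (W : Type) (_ : Fintype W) (Q : SimpleGraph W),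
    Fintype.card W = 2 * j + 3 ∧ (∀ a, 1 ≤ (Q.neighborSet a).ncard) ∧
      ∑ a, (Q.neighborSet a).ncard = 2 * j + 4 := by
  induction j with
  | zero =>
    refine ⟨Fin 1 ⊕ Fin 2, inferInstance, completeBipartiteGraph (Fin 1) (Fin 2), by simp, ?_, ?_⟩
    · intro a
      rw [ncard_neighborSet]
      revert a
      decide
    · rw [sum_congr rfl fun a _ => ncard_neighborSet _ a]
      decide
  | succ j ih =>
    obtain ⟨W, _, Q, hc, hd, hs⟩ := ih
    have h1 : ∀ a, ((⊤ : SimpleGraph (Fin 2)).neighborSet a).ncard = 1 := fun a => by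
      rw [ncard_neighborSet, complete_graph_degree, Fintype.card_fin]
    refine ⟨W ⊕ Fin 2, inferInstance, Q ⊕g ⊤, ?_, ?_, ?_⟩
    · rw [Fintype.card_sum, hc, Fintype.card_fin]
      ring
    · rintro (a | a)
      · rw [ncard_neighborSet_sum_inl]
        exact hd a
      · rw [ncard_neighborSet_sum_inr, h1]
    · rw [Fintype.sum_sum_type]
      simp_rw [ncard_neighborSet_sum_inl, ncard_neighborSet_sum_inr, h1]
      rw [hs]
      simp only [sum_const, card_univ, Fintype.card_fin, smul_eq_mul]
      ring

/-- For even `k`, the complete graph on `k + 1` vertices with the edges of `exists_edge_cover`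
removed has all degrees `k - 1`, except for one vertex of degree `k - 2`. -/
lemma nice_odd {k : ℕ} (hk : 3 ≤ k) (hke : Even k) : Nice k 1 (k + 1) := by
  classical
  obtain ⟨m, hm⟩ := hke
  obtain ⟨W, _, Q, hc, hd, hs⟩ := exists_edge_cover (m - 1)
  have hcard : Fintype.card W = k + 1 := by omega
  have h1 : ∀ a, (Qᶜ.neighborSet a).ncard + (Q.neighborSet a).ncard = k := fun a => by
    have h2 := Q.degree_lt_card_verts a
    rw [ncard_neighborSet, ncard_neighborSet, degree_compl, hcard]
    omega
  have h2 : ∑ a, (Qᶜ.neighborSet a).ncard + (k + 2) = k * (k + 1) := by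
    have : ∑ a, ((Qᶜ.neighborSet a).ncard + (Q.neighborSet a).ncard) = k * (k + 1) := by
      simp [h1, hcard, mul_comm]
    rw [sum_add_distrib, hs] at this
    omega
  have := nice_of_card_le (k := k) (δ := 1) Qᶜ (by omega)
    (fun a => by have := h1 a; have := hd a; omega) (by
      rw [hcard]
      have h3 : (k - 1) * (k + 1) + (k + 1) = k * (k + 1) := by
        rw [← Nat.succ_mul, Nat.succ_eq_add_one, Nat.sub_add_cancel (by omega)]
      omega)
  rwa [hcard] at this

/-- Since `k ^ 2 - 1 = (k - 1) * (k + 1)`, taking `m * k` complete blocks (reduced modulo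
`2 * k - 2`) leaves a multiple of `2 * k - 2` vertices when `m * (k + 1)` is even. -/
lemma nice_of_even {k m : ℕ} (hk : 3 ≤ k) (he : Even (m * (k + 1))) (hm : 2 * k ^ 2 ≤ m) :
    Nice k 0 m := by
  set a := (m * k) % (2 * k - 2) with ha
  have ha1 : a < 2 * k - 2 := Nat.mod_lt _ (by omega)
  have ha2 : a * k ≤ m := by
    have h1 : a * k ≤ 2 * k * k := Nat.mul_le_mul_right _ (by omega)
    rw [mul_assoc, ← sq] at h1
    exact h1.trans hm
  have h1 : a * k ≡ m [MOD 2 * k - 2] := by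
    have h2 : a * k ≡ m * k * k [MOD 2 * k - 2] := (Nat.mod_modEq _ _).mul_right _
    have h3 : m ≡ m * k * k [MOD 2 * k - 2] := by
      rw [Nat.modEq_iff_dvd]
      obtain ⟨r, hr⟩ := he
      refine ⟨r, ?_⟩
      have hr' : (m : ℤ) * (k + 1) = r + r := by exact_mod_cast hr
      rw [Nat.cast_sub (by omega)]
      push_cast
      linear_combination ((k : ℤ) - 1) * hr'
    exact h2.trans h3.symm
  obtain ⟨b, hb⟩ := (Nat.modEq_iff_dvd' ha2).1 h1
  have h4 := ((nice_complete hk).mul a).add ((nice_bipartite hk).mul b)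
  rwa [mul_comm b, ← hb, Nat.add_sub_cancel' ha2] at h4

lemma nice_mod_two {k p : ℕ} (hk : 3 ≤ k) (hp : 2 * k ^ 2 + k + 1 ≤ p) :
    Nice k ((k - 1) * p % 2) p := by
  rcases Nat.even_or_odd (p * (k + 1)) with h | h
  · have h1 : (k - 1) * p % 2 = 0 := by
      rw [← Nat.even_iff]
      rcases Nat.even_mul.1 h with h | h
      · exact h.mul_left _
      · have : Even (k - 1) := by
          rw [Nat.even_iff] at h ⊢
          omega
        exact this.mul_right _
    rw [h1]
    exact nice_of_even hk h (by omega)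
  · obtain ⟨hp1, hk1⟩ := Nat.odd_mul.1 h
    have h1 : (k - 1) * p % 2 = 1 := by
      rw [← Nat.odd_iff]
      refine Odd.mul ?_ hp1
      rw [Nat.odd_iff] at hk1 ⊢
      omega
    rw [h1]
    have hke : Even k := by
      rw [Nat.odd_iff] at hk1
      rw [Nat.even_iff]
      omega
    have h2 : Nice k 0 (p - (k + 1)) := nice_of_even hk
      (Even.mul_right (by rw [Nat.odd_iff] at hp1 hk1; rw [Nat.even_iff]; omega) _) (by omega)
    have h3 := h2.add (nice_odd hk hke)
    rwa [Nat.zero_add, Nat.sub_add_cancel (by omega)] at h3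

end Blocks

/-! ### The Turán number -/

section Final

open Finset

lemma exists_single_edge (q : ℕ) (hq : 2 ≤ q) : ∃ E : SimpleGraph (Fin q),
    (∀ a b a' b', E.Adj a b → E.Adj a' b' → a = a' ∨ (a = b' ∧ b = a')) ∧
      2 ≤ ∑ b, (E.neighborSet b).ncard := by
  have h01 : (⟨0, by omega⟩ : Fin q) ≠ ⟨1, by omega⟩ := by simp
  refine ⟨edge ⟨0, by omega⟩ ⟨1, by omega⟩, ?_, ?_⟩
  · intro a b a' b' h h'
    rw [edge_adj] at h h'
    grind
  · rw [← two_mul_card_edgeSet, edgeSet_edge_of_ne h01]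
    simp

lemma exists_wheel_free {k p q : ℕ} (hk : 3 ≤ k) (hp : 2 * k ^ 2 + k + 1 ≤ p) (hq : 2 ≤ q) :
    ∃ H : SimpleGraph (Fin (p + q)), ¬ Contains H (wheelGraph (2 * k + 1)) ∧
      p * q + (k - 1) * p / 2 + 1 ≤ Nat.card H.edgeSet := by
  obtain ⟨W, ι, _, D, ℓ, hc, hd, hl, hf, hs⟩ := nice_mod_two hk hp
  obtain ⟨E, hE, hE2⟩ := exists_single_edge q hq
  have hcard : Fintype.card (W ⊕ Fin q) = p + q := by simp [hc]
  let e := Fintype.equivFinOfCardEq hcard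
  let i := Iso.map e (graphJoin D E)
  refine ⟨(graphJoin D E).map e, ?_, ?_⟩
  · rintro ⟨f, hf'⟩
    exact not_contains_graphJoin hk ℓ hd hl hf hE
      ⟨i.symm.toHom.comp f, i.symm.injective.comp hf'⟩
  · have h1 := two_mul_card_edgeSet_graphJoin D E
    rw [hc, Fintype.card_fin] at h1
    rw [← Nat.card_congr i.mapEdgeSet]
    omega

/-- Both parts of an optimal partition are large, since `n ^ 2 / 4` edges are possible. -/
lemma parts_large {k n p : ℕ} (P : ℕ) (hk : 3 ≤ k) (hkP : k ≤ P) (hn : 8 * P + 8 ≤ n) (hp : p ≤ n)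
    (h : extremal k n = p * (n - p) + (k - 1) * p / 2) : P ≤ p ∧ 2 ≤ n - p := by
  have h1 := le_extremal (k := k) (show n / 2 + (n - n / 2) = n by omega)
  have h2 : (k - 1) * p / 2 ≤ P * p := by
    have : (k - 1) * p ≤ P * p := Nat.mul_le_mul_right _ (by omega)
    omega
  have h3 : (4 * P + 3) * (n - n / 2) ≤ n / 2 * (n - n / 2) := Nat.mul_le_mul_right _ (by omega)
  have h4 : (4 * P + 3) * n ≤ (4 * P + 3) * (2 * (n - n / 2)) := Nat.mul_le_mul_left _ (by omega)
  have h7 : (4 * P + 3) * n = 4 * (P * n) + 3 * n := by ring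
  have h8 : (4 * P + 3) * (2 * (n - n / 2)) = 2 * ((4 * P + 3) * (n - n / 2)) := by ring
  have h9 : n ≤ P * n := Nat.le_mul_of_pos_left _ (by omega)
  constructor
  · by_contra! hlt
    have h5 : p * (n - p) ≤ P * n := Nat.mul_le_mul hlt.le (by omega)
    have h6 : P * p ≤ P * n := Nat.mul_le_mul_left _ hp
    omega
  · by_contra! hlt
    have h5 : p * (n - p) ≤ n * 1 := Nat.mul_le_mul hp (by omega)
    have h6 : P * p ≤ P * n := Nat.mul_le_mul_left _ hp
    omega

end Final

/-- Turán number of the odd wheel `W_{2k+1}` for `k ≥ 3`. -/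
theorem turanNumber_odd_wheel (k : ℕ) (hk : 3 ≤ k) :
    ∃ n₀ : ℕ, ∀ n : ℕ, n > n₀ →
      exNum n (wheelGraph (2 * k + 1)) =
        ((Finset.range (n + 1)).sup (fun p => p * (n - p) + (k - 1) * p / 2)) + 1 := by
  classical
  obtain ⟨n₀, hn₀⟩ := exists_card_edges_le k hk
  refine ⟨n₀ + (8 * (2 * k ^ 2 + k + 1) + 8), fun n hn => ?_⟩
  change _ = extremal k n + 1
  have hupper : ∀ e ∈ {e | ∃ G : SimpleGraph (Fin n), ¬ Contains G (wheelGraph (2 * k + 1)) ∧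
      Nat.card G.edgeSet = e}, e ≤ extremal k n + 1 := by
    rintro _ ⟨G, hG, rfl⟩
    have := hn₀ (Fin n) G (by rw [Fintype.card_fin]; omega) (wheelFree_of_not_contains hG)
    rwa [Fintype.card_fin, edgeFinset_card, ← Nat.card_eq_fintype_card] at this
  obtain ⟨p, hp, hext⟩ := exists_eq_extremal k n
  obtain ⟨hp1, hq⟩ := parts_large (2 * k ^ 2 + k + 1) hk (by omega) (by omega) hp hext
  obtain ⟨q, rfl⟩ := Nat.exists_eq_add_of_le hp
  rw [Nat.add_sub_cancel_left] at hq hext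
  obtain ⟨H, hH, hcard⟩ := exists_wheel_free hk hp1 hq
  rw [← hext] at hcard
  refine IsGreatest.csSup_eq ⟨⟨H, hH, ?_⟩, hupper⟩
  exact (hupper _ ⟨H, hH, rfl⟩).antisymm hcard
end

section
/- Let a, b be positive integers with a ≤ b, and let G be a graph on n vertices containing no complete bipartite graph K_{a,b} as a subgraph. Then the number of edges of G satisfies e(G) ≤ ((b−1)^{1/a} / 2) · n^{2 − 1/a} + ((a−1)/2) · n. -/
/-!
Double counting of the pairs `(v, S)`, where `S` is a set of `a` neighbours of `v`. Each `a`-set `S`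
has at most `b - 1` common neighbours, as otherwise it would span a `K_{a,b}` with `b` of them, so
`∑ v, (d v).choose a ≤ (b - 1) * n.choose a` (`sum_choose_degree_le`). Multiplying by `a!` and using
`(d + 1 - a) ^ a ≤ d.descFactorial a` and `n.descFactorial a ≤ n ^ a`, this becomes
`∑ v, (d v + 1 - a) ^ a ≤ (b - 1) * n ^ a` with truncated subtraction. The power mean inequality
turns it into `(∑ v, (d v + 1 - a)) ^ a ≤ (b - 1) * n ^ (2 * a - 1)`. Taking `a`-th roots and using
`2 e(G) = ∑ v, d v ≤ ∑ v, (d v + 1 - a) + (a - 1) * n` gives the bound.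
-/

open SimpleGraph

/-- An `a`-set and a `b`-set that are completely joined to each other span a `K_{a,b}`; they are
automatically disjoint because adjacency is irreflexive. -/
lemma contains_of_complete_pair {V : Type*} {G : SimpleGraph V} {a b : ℕ} {S T : Finset V}
    (hS : a ≤ S.card) (hT : b ≤ T.card) (h : ∀ s ∈ S, ∀ t ∈ T, G.Adj s t) :
    Contains G (completeBipartiteGraph (Fin a) (Fin b)) := by
  obtain ⟨f⟩ : Nonempty (Fin a ↪ S) :=
    Function.Embedding.nonempty_of_card_le (by simpa using hS)
  obtain ⟨g⟩ : Nonempty (Fin b ↪ T) :=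
    Function.Embedding.nonempty_of_card_le (by simpa using hT)
  have hadj : ∀ i j, G.Adj (f i : V) (g j : V) := fun i j => h _ (f i).2 _ (g j).2
  refine ⟨⟨Sum.elim (fun i => (f i : V)) (fun j => (g j : V)), ?_⟩, ?_⟩
  · rintro (i | i) (j | j) hij
    · simp at hij
    · exact hadj i j
    · exact (hadj j i).symm
    · simp at hij
  · rintro (i | i) (j | j) hij
    · exact congrArg Sum.inl (f.injective (Subtype.ext hij))
    · exact absurd hij (hadj i j).ne
    · exact absurd hij (hadj j i).ne'
    · exact congrArg Sum.inr (g.injective (Subtype.ext hij))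

/-- Double counting of the stars with `a` leaves, by centre and by leaf set. When `b = 0` the
hypothesis forces `n < a`, so both sides vanish despite the truncated `b - 1`. -/
lemma sum_choose_degree_le {V : Type*} [Fintype V] [DecidableEq V] (G : SimpleGraph V)
    [DecidableRel G.Adj] {a b : ℕ}
    (hG : ¬ Contains G (completeBipartiteGraph (Fin a) (Fin b))) :
    ∑ v, (G.degree v).choose a ≤ (b - 1) * (Fintype.card V).choose a := by
  have key := Finset.sum_card_bipartiteAbove_eq_sum_card_bipartiteBelow
    (s := (Finset.univ : Finset V)) (t := Finset.powersetCard a (Finset.univ : Finset V))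
    (fun v S => S ⊆ G.neighborFinset v)
  have hleft : ∀ v : V, ((Finset.powersetCard a (Finset.univ : Finset V)).bipartiteAbove
      (fun v S => S ⊆ G.neighborFinset v) v).card = (G.degree v).choose a := by
    intro v
    rw [← G.card_neighborFinset_eq_degree, ← Finset.card_powersetCard]
    congr 1
    ext S
    simp [Finset.mem_bipartiteAbove, Finset.mem_powersetCard, and_comm]
  simp only [hleft] at key
  rw [key, mul_comm, ← Finset.card_univ (α := V), ← Finset.card_powersetCard, ← smul_eq_mul]
  refine Finset.sum_le_card_nsmul _ _ _ fun S hS => ?_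
  by_contra! hlt
  refine hG (contains_of_complete_pair (S := S)
    (Finset.mem_powersetCard.1 hS).2.ge (Nat.le_of_pred_lt hlt) fun s hs t ht => ?_)
  have := ((Finset.mem_bipartiteBelow _).1 ht).2 hs
  exact ((G.mem_neighborFinset _ _).1 this).symm

/-- The double-counting bound with binomial coefficients replaced by powers. The subtraction in
`d + 1 - a` is truncated, so vertices of degree below `a` contribute nothing when `a` is positive.
-/
lemma sum_pow_degree_le {V : Type*} [Fintype V] [DecidableEq V] (G : SimpleGraph V)
    [DecidableRel G.Adj] {a b : ℕ}
    (hG : ¬ Contains G (completeBipartiteGraph (Fin a) (Fin b))) :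
    ∑ v, (G.degree v + 1 - a) ^ a ≤ (b - 1) * Fintype.card V ^ a := by
  calc ∑ v, (G.degree v + 1 - a) ^ a
      ≤ ∑ v, a.factorial * (G.degree v).choose a := by
        refine Finset.sum_le_sum fun v _ => ?_
        rw [← Nat.descFactorial_eq_factorial_mul_choose]
        exact Nat.pow_sub_le_descFactorial _ _
    _ = a.factorial * ∑ v, (G.degree v).choose a := by rw [Finset.mul_sum]
    _ ≤ a.factorial * ((b - 1) * (Fintype.card V).choose a) :=
        Nat.mul_le_mul_left _ (sum_choose_degree_le G hG)
    _ = (b - 1) * (Fintype.card V).descFactorial a := by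
        rw [Nat.descFactorial_eq_factorial_mul_choose]; ring
    _ ≤ (b - 1) * Fintype.card V ^ a :=
        Nat.mul_le_mul_left _ (Nat.descFactorial_le_pow _ _)

/-- Kővári–Sós–Turán theorem. -/
theorem kovari_sos_turan (a b : ℕ) (ha : 1 ≤ a) (hab : a ≤ b) {V : Type*} [Fintype V]
    (G : SimpleGraph V)
    (hG : ¬ Contains G (completeBipartiteGraph (Fin a) (Fin b)))
    (n : ℕ) (hn : n = Fintype.card V) :
    (Nat.card G.edgeSet : ℝ) ≤
      ((b : ℝ) - 1) ^ ((1 : ℝ) / a) / 2 * (n : ℝ) ^ (2 - (1 : ℝ) / a) +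
        ((a : ℝ) - 1) / 2 * n := by
  classical
  subst hn
  set n := Fintype.card V
  set X : ℕ := ∑ v, (G.degree v + 1 - a)
  have ha0 : (a : ℝ) ≠ 0 := by positivity
  have hb : (0 : ℝ) ≤ (b : ℝ) - 1 := by
    rw [sub_nonneg]; exact_mod_cast ha.trans hab
  have hpow : X ^ a ≤ n ^ (a - 1) * ((b - 1) * n ^ a) := by
    have h := pow_sum_le_card_mul_sum_pow (s := Finset.univ)
      (f := fun v => G.degree v + 1 - a) (fun _ _ => Nat.zero_le _) (a - 1)
    rw [Nat.sub_add_cancel ha] at h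
    exact h.trans (Nat.mul_le_mul_left _ (sum_pow_degree_le G hG))
  have hroot : (X : ℝ) ≤ ((b : ℝ) - 1) ^ ((1 : ℝ) / a) * (n : ℝ) ^ (2 - (1 : ℝ) / a) := by
    refine le_of_pow_le_pow_left₀ (n := a) (by omega) (by positivity) ?_
    have h1 : (((b : ℝ) - 1) ^ ((1 : ℝ) / a)) ^ a = (b : ℝ) - 1 := by
      rw [one_div, Real.rpow_inv_natCast_pow hb (by omega)]
    have h2 : ((n : ℝ) ^ (2 - (1 : ℝ) / a)) ^ a = (n : ℝ) ^ (a - 1) * (n : ℝ) ^ a := by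
      rw [← Real.rpow_natCast, ← Real.rpow_mul (by positivity), ← pow_add, ← Real.rpow_natCast]
      congr 1
      rw [sub_mul, one_div, inv_mul_cancel₀ ha0]
      push_cast [Nat.cast_sub ha]
      ring
    rw [mul_pow, h1, h2]
    have h3 : (X : ℝ) ^ a ≤ (n : ℝ) ^ (a - 1) * (((b - 1 : ℕ) : ℝ) * (n : ℝ) ^ a) := by
      exact_mod_cast hpow
    rw [Nat.cast_sub (ha.trans hab), Nat.cast_one] at h3
    linarith
  have hdeg : 2 * Nat.card G.edgeSet ≤ X + n * (a - 1) := by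
    have hcard : Nat.card G.edgeSet = G.edgeFinset.card := by
      rw [Nat.card_eq_fintype_card, SimpleGraph.edgeFinset_card]
    rw [hcard, ← G.sum_degrees_eq_twice_card_edges]
    calc ∑ v, G.degree v ≤ ∑ v, ((G.degree v + 1 - a) + (a - 1)) :=
          Finset.sum_le_sum fun v _ => by omega
      _ = X + n * (a - 1) := by
          rw [Finset.sum_add_distrib, Finset.sum_const, Finset.card_univ, smul_eq_mul]
  have hdeg' : 2 * (Nat.card G.edgeSet : ℝ) ≤ X + n * ((a : ℝ) - 1) := by
    have h : ((2 * Nat.card G.edgeSet : ℕ) : ℝ) ≤ ((X + n * (a - 1) : ℕ) : ℝ) :=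
      Nat.cast_le.2 hdeg
    push_cast [Nat.cast_sub ha] at h
    exact h
  linarith
end
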